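/- In X_6' (k = 6), for the class d = 4[L] − Σ_{i=1}^6 [E_i] (so a = 4, bᵢ = 1 for all i, and d·[E] = 2), the refined count of d-marked floor diagrams of genus 0 and type (∅,(1,1)) is N_q^{∅,(1,1)}(X_6',4[L]−Σ[E_i],0) = [2]_q⁴ + [4]_q² + 10[3]_q² + 67[2]_q² + 226. -/

import Mathlib

open LaurentPolynomial

open scoped Classical

noncomputable section FloorDiagrams

/-- The quantum integer `[n]_q = q^{−(n−1)/2} + q^{−(n−3)/2} + ⋯ + q^{(n−1)/2}`,
as a Laurent polynomial in the variable `t = q^{1/2}` (here `T m` denotes `t^m`). -/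
def qInt (n : ℕ) : LaurentPolynomial ℚ :=
  ∑ j ∈ Finset.range n, T (2 * (j : ℤ) - ((n : ℤ) - 1))

/-- A finite weighted oriented (multi)graph: `nV` vertices, `nE` edges, each edge `e`
having a source `src e`, a target `tgt e` and a positive integer weight `w e`. -/
structure WOGraph where
  nV : ℕ
  nE : ℕ
  src : Fin nE → Fin nV
  tgt : Fin nE → Fin nV
  w : Fin nE → ℕ
  w_pos : ∀ e, 0 < w e

namespace WOGraph

variable (G : WOGraph)

/-- The edge `e` is adjacent to the vertex `v`. -/
def Adj (e : Fin G.nE) (v : Fin G.nV) : Prop :=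
  G.src e = v ∨ G.tgt e = v

/-- One step of the (unoriented) adjacency relation between vertices. -/
def connStep (u v : Fin G.nV) : Prop :=
  ∃ e, (G.src e = u ∧ G.tgt e = v) ∨ (G.src e = v ∧ G.tgt e = u)

/-- The graph is connected. -/
def Connected : Prop :=
  0 < G.nV ∧ ∀ u v, Relation.ReflTransGen G.connStep u v

/-- One step of the oriented relation between vertices. -/
def dirStep (u v : Fin G.nV) : Prop :=
  ∃ e, G.src e = u ∧ G.tgt e = v

/-- The oriented graph is acyclic: there is no non-trivial oriented cycle. -/
def Acyclic : Prop :=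
  ∀ v, ¬ Relation.TransGen G.dirStep v v

/-- The number of edges adjacent to a vertex (with multiplicity). -/
def degree (v : Fin G.nV) : ℕ :=
  (Finset.univ.filter fun e => G.src e = v).card +
    (Finset.univ.filter fun e => G.tgt e = v).card

/-- A leaf is a vertex adjacent to exactly one edge. -/
def IsLeaf (v : Fin G.nV) : Prop := G.degree v = 1

/-- `Vert^∞(G)`: leaves all of whose adjacent edges are outgoing. -/
def InfVert (v : Fin G.nV) : Prop :=
  G.IsLeaf v ∧ ∀ e, G.Adj e v → G.src e = v

/-- `Edge^∞(G)`: edges adjacent to a vertex of `Vert^∞(G)`. -/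
def InfEdge (e : Fin G.nE) : Prop :=
  ∃ v, G.Adj e v ∧ G.InfVert v

/-- The divergence of a vertex: sum of weights of incoming edges minus sum of weights of
outgoing edges. -/
def div (v : Fin G.nV) : ℤ :=
  (∑ e ∈ Finset.univ.filter (fun e => G.tgt e = v), (G.w e : ℤ)) -
    (∑ e ∈ Finset.univ.filter (fun e => G.src e = v), (G.w e : ℤ))

/-- A sink is a vertex all of whose adjacent edges are oriented toward it. -/
def IsSink (v : Fin G.nV) : Prop :=
  ∀ e, G.Adj e v → G.tgt e = v

/-- One step of the partial order on `Vert ⊔ Edge` induced by the orientation: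
a vertex is below each of its outgoing edges, and each edge is below its target. -/
def veStep : (Fin G.nV ⊕ Fin G.nE) → (Fin G.nV ⊕ Fin G.nE) → Prop
  | Sum.inl u, Sum.inr e => G.src e = u
  | Sum.inr e, Sum.inl v => G.tgt e = v
  | _, _ => False

end WOGraph

/-- `G` is a floor diagram (relative to a conic) of genus `g` and degree `a`. -/
structure IsFloorDiagram (G : WOGraph) (g a : ℕ) : Prop where
  conn : G.Connected
  acyclic : G.Acyclic
  betti : G.nE + 1 = G.nV + g
  div_floor : ∀ v, ¬ G.InfVert v → G.div v = 2 ∨ G.div v = 4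
  div_inf : ∀ v, G.InfVert v → G.div v ≤ -1
  sink_of_two : ∀ v, ¬ G.InfVert v → G.div v = 2 → G.IsSink v
  total_div : (∑ v ∈ Finset.univ.filter (fun v => G.InfVert v), G.div v) = -(2 * (a : ℤ))

/-- The marking domain `A₀ ⊔ A₁ ⊔ ⋯ ⊔ A_k`, where
`A₀ = {1, …, a − 1 + g + l(μ₁) + l(μ₂)}` and `|Aᵢ| = bᵢ`. -/
def MarkDom (k g a : ℕ) (b : Fin k → ℕ) (l1 l2 : ℕ) : Type :=
  Fin (a + g + l1 + l2 - 1) ⊕ (Σ i : Fin k, Fin (b i))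

/-- `m` is a `d`-marking of type `(μ₁, μ₂)` of the floor diagram `G` of genus `g` and
degree `a`, where `d` is encoded by `a = d·[L]` and `bᵢ = d·[Eᵢ]`. -/
structure IsMarking (k g a : ℕ) (b : Fin k → ℕ) (μ₁ μ₂ : List ℕ) (G : WOGraph)
    (m : MarkDom k g a b μ₁.length μ₂.length → Fin G.nV ⊕ Fin G.nE) : Prop where
  inj : Function.Injective m
  /-- `m` is increasing: on `A₀` (with its natural order) it is compatible with the strict
  partial order on `Vert ⊔ Edge` induced by the orientation; the elements of
  `A₁, …, A_k` are incomparable, hence impose no condition. -/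
  incr : ∀ i j : Fin (a + g + μ₁.length + μ₂.length - 1),
    Relation.TransGen G.veStep (m (Sum.inl i)) (m (Sum.inl j)) → i < j
  /-- No floor of degree `1` is in the image of `m`. -/
  no_floor_one : ∀ v, ¬ G.InfVert v → G.div v = 2 → ∀ p, m p ≠ Sum.inl v
  /-- For `v ∈ Vert^∞` with adjacent edge `e`, exactly one of `v`, `e` is in the image. -/
  inf_pair : ∀ v, G.InfVert v → ∀ e, G.Adj e v →
    Xor' (∃ p, m p = Sum.inl v) (∃ p, m p = Sum.inr e)
  /-- `m(A₁ ∪ ⋯ ∪ A_k) ⊆ Vert^∞`. -/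
  exc_vert : ∀ (i : Fin k) (p : Fin (b i)),
    ∃ v, G.InfVert v ∧ m (Sum.inr ⟨i, p⟩) = Sum.inl v
  /-- `m({1, …, l(μ₁)}) = m(A₀) ∩ Vert^∞`. -/
  mu1_vert : ∀ i : Fin (a + g + μ₁.length + μ₂.length - 1),
    (∃ v, G.InfVert v ∧ m (Sum.inl i) = Sum.inl v) ↔ (i : ℕ) < μ₁.length
  /-- Every floor is adjacent to at most one edge adjacent to a vertex of `m(Aᵢ)`. -/
  floor_once : ∀ (i : Fin k) (v : Fin G.nV), ¬ G.InfVert v →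
    ∀ e e' : Fin G.nE, G.Adj e v → G.Adj e' v →
      (∃ (p : Fin (b i)) (u : Fin G.nV), m (Sum.inr ⟨i, p⟩) = Sum.inl u ∧ G.Adj e u) →
      (∃ (p : Fin (b i)) (u : Fin G.nV), m (Sum.inr ⟨i, p⟩) = Sum.inl u ∧ G.Adj e' u) →
      e = e'
  /-- For `i ∈ {1, …, l(μ₁)}`, the edge adjacent to `m(i)` has weight `μ₁^{(i)}`. -/
  mu1_weight : ∀ (i : Fin (a + g + μ₁.length + μ₂.length - 1)) (h : (i : ℕ) < μ₁.length)
    (v : Fin G.nV) (e : Fin G.nE),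
      m (Sum.inl i) = Sum.inl v → G.Adj e v → G.w e = μ₁.get ⟨(i : ℕ), h⟩
  /-- Exactly `l(μ₂)` edges of `Edge^∞` are in the image of `m|_{A₀}`, and their weights
  are the entries of `μ₂`. -/
  mu2_edges :
    ((Finset.univ.filter fun e : Fin G.nE =>
        G.InfEdge e ∧ ∃ i : Fin (a + g + μ₁.length + μ₂.length - 1),
          m (Sum.inl i) = Sum.inr e).val.map G.w) = (μ₂ : Multiset ℕ)

/-- A `d`-marked floor diagram of genus `g` and type `(μ₁, μ₂)`, where the class `d` is
encoded by `a = d·[L]` and `bᵢ = d·[Eᵢ]`. -/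
structure MarkedFD (k g a : ℕ) (b : Fin k → ℕ) (μ₁ μ₂ : List ℕ) where
  G : WOGraph
  m : MarkDom k g a b μ₁.length μ₂.length → Fin G.nV ⊕ Fin G.nE
  fd : IsFloorDiagram G g a
  marking : IsMarking k g a b μ₁ μ₂ G m

namespace MarkedFD

variable {k g a : ℕ} {b : Fin k → ℕ} {μ₁ μ₂ : List ℕ}

/-- Equivalence of marked floor diagrams: an isomorphism of weighted oriented graphs
together with a bijection of the marking sets which is the identity on `A₀` and maps
each `Aᵢ` (`i ≥ 1`) bijectively onto itself, compatible with the markings. -/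
def Equivalent (X Y : MarkedFD k g a b μ₁ μ₂) : Prop :=
  ∃ (φV : Fin X.G.nV ≃ Fin Y.G.nV) (φE : Fin X.G.nE ≃ Fin Y.G.nE)
    (ψ : MarkDom k g a b μ₁.length μ₂.length ≃ MarkDom k g a b μ₁.length μ₂.length),
      (∀ e, Y.G.src (φE e) = φV (X.G.src e)) ∧
      (∀ e, Y.G.tgt (φE e) = φV (X.G.tgt e)) ∧
      (∀ e, Y.G.w (φE e) = X.G.w e) ∧
      (∀ i, ψ (Sum.inl i) = Sum.inl i) ∧
      (∀ (i : Fin k) (p : Fin (b i)), ∃ p' : Fin (b i),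
        ψ (Sum.inr ⟨i, p⟩) = Sum.inr ⟨i, p'⟩) ∧
      (∀ p, Y.m (ψ p) = Sum.map φV φE (X.m p))

variable (X : MarkedFD k g a b μ₁ μ₂)

/-- `Edge^{μ₁}`: edges adjacent to `m({1, …, l(μ₁)})`. -/
def EdgeMu1 : Finset (Fin X.G.nE) :=
  Finset.univ.filter fun e =>
    ∃ i : Fin (a + g + μ₁.length + μ₂.length - 1), (i : ℕ) < μ₁.length ∧
      ∃ v, X.m (Sum.inl i) = Sum.inl v ∧ X.G.Adj e v

/-- `Edge^{μ₂}`: the `l(μ₂)` edges of `Edge^∞` in the image of `m|_{A₀}`. -/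
def EdgeMu2 : Finset (Fin X.G.nE) :=
  Finset.univ.filter fun e =>
    X.G.InfEdge e ∧ ∃ i : Fin (a + g + μ₁.length + μ₂.length - 1),
      X.m (Sum.inl i) = Sum.inr e

/-- `Edge°`: edges not in `Edge^∞`. -/
def EdgeO : Finset (Fin X.G.nE) :=
  Finset.univ.filter fun e => ¬ X.G.InfEdge e

/-- The q-refined (Block–Göttsche) multiplicity of a marked floor diagram:
`∏_{e∈Edge^{μ₂}} [w(e)]_q/w(e) · ∏_{e∈Edge^{μ₁}} [w(e)]_q/w(e) · ∏_{e∈Edge^{μ₂}} w(e)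
 · ∏_{e∈Edge°} [w(e)]_q²`. -/
def multq : LaurentPolynomial ℚ :=
  (∏ e ∈ X.EdgeMu2, (C ((X.G.w e : ℚ)⁻¹) * qInt (X.G.w e))) *
    (∏ e ∈ X.EdgeMu1, (C ((X.G.w e : ℚ)⁻¹) * qInt (X.G.w e))) *
    (∏ e ∈ X.EdgeMu2, C ((X.G.w e : ℚ))) *
    (∏ e ∈ X.EdgeO, (qInt (X.G.w e)) ^ 2)

/-- The complex multiplicity of a marked floor diagram:
`∏_i μ₂^{(i)} · ∏_{e∈Edge°} w(e)²`. -/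
def multC : ℚ :=
  (μ₂.map fun x => (x : ℚ)).prod * ∏ e ∈ X.EdgeO, (X.G.w e : ℚ) ^ 2

end MarkedFD

/-- `N` is the refined count `N_q^{μ₁,μ₂}(X_k', d, g)` of `d`-marked floor diagrams of
genus `g` and type `(μ₁, μ₂)`: the sum of the q-refined multiplicities over a (finite) set
of representatives of the equivalence classes of marked floor diagrams. -/
def IsRefinedCount (k g a : ℕ) (b : Fin k → ℕ) (μ₁ μ₂ : List ℕ)
    (N : LaurentPolynomial ℚ) : Prop :=
  ∃ (ι : Type) (hι : Fintype ι) (rep : ι → MarkedFD k g a b μ₁ μ₂),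
    (∀ X : MarkedFD k g a b μ₁ μ₂, ∃! i : ι, X.Equivalent (rep i)) ∧
    N = ∑ i ∈ @Finset.univ ι hι, (rep i).multq

/-- `N` is the complex count `N_ℂ^{μ₁,μ₂}(X_k', d, g)` of `d`-marked floor diagrams of
genus `g` and type `(μ₁, μ₂)`. -/
def IsComplexCount (k g a : ℕ) (b : Fin k → ℕ) (μ₁ μ₂ : List ℕ) (N : ℚ) : Prop :=
  ∃ (ι : Type) (hι : Fintype ι) (rep : ι → MarkedFD k g a b μ₁ μ₂),
    (∀ X : MarkedFD k g a b μ₁ μ₂, ∃! i : ι, X.Equivalent (rep i)) ∧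
    N = ∑ i ∈ @Finset.univ ι hι, (rep i).multC

end FloorDiagrams

/-- Labels of the eight ends: `Sum.inl` for the two ends whose edge is marked by `A₀`, and
`Sum.inr` for the six ends whose vertex is marked by `A₁, …, A₆`. -/
abbrev EndLabel := Fin 2 ⊕ Fin 6

/-- Sources in the model star diagram: floor `0` emits all the bounded edges. -/
def starSrc (s : ℕ) : Fin (s + 1) ⊕ EndLabel → Fin (s + 2) ⊕ EndLabel :=
  Sum.elim (fun _ => Sum.inl 0) Sum.inr

/-- Targets in the model star diagram whose ends are attached to the floors according to `t`. -/
def starTgt (s : ℕ) (t : EndLabel → Fin (s + 2)) :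
    Fin (s + 1) ⊕ EndLabel → Fin (s + 2) ⊕ EndLabel :=
  Sum.elim (fun j => Sum.inl j.succ) (fun i => Sum.inl (t i))

/-- The number of labels which `t` sends to `v`. -/
def fiberCard {α β : Type} [Fintype α] [DecidableEq β] (t : α → β) (v : β) : ℕ :=
  (Finset.univ.filter fun i => t i = v).card

/-- The divergence of the floors other than floor `0`. -/
def leafDiv (s : ℕ) : ℕ := if s = 0 then 4 else 2

/-- An identification of `G` with a star diagram with `s + 2` floors and eight ends. -/
structure StarLayout (G : WOGraph) (s : ℕ) (t : EndLabel → Fin (s + 2)) where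
  fV : Fin (s + 2) ⊕ EndLabel ≃ Fin G.nV
  fE : Fin (s + 1) ⊕ EndLabel ≃ Fin G.nE
  src_eq : ∀ e, G.src (fE e) = fV (starSrc s e)
  tgt_eq : ∀ e, G.tgt (fE e) = fV (starTgt s t e)
  w_end : ∀ i, G.w (fE (Sum.inr i)) = 1

lemma sum_fiberCard {α : Type} [Fintype α] {n : ℕ} (t : α → Fin n) :
    ∑ v, fiberCard t v = Fintype.card α := by
  simpa [fiberCard] using
    (Finset.card_eq_sum_card_fiberwise (s := Finset.univ) (t := Finset.univ) (f := t)
      (by simp [Set.MapsTo])).symm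

lemma fiberCard_zero_add {s : ℕ} (t : EndLabel → Fin (s + 2)) :
    fiberCard t 0 + ∑ j : Fin (s + 1), fiberCard t j.succ = 8 := by
  have := sum_fiberCard t
  rw [Fin.sum_univ_succ] at this
  simpa using this

lemma fiberCard_sum {α β γ : Type} [Fintype α] [Fintype β] [DecidableEq γ] (t : α ⊕ β → γ)
    (v : γ) : fiberCard t v =
      fiberCard (fun i => t (Sum.inl i)) v + fiberCard (fun i => t (Sum.inr i)) v := by
  simp only [fiberCard, Finset.card_filter, Fintype.sum_sum_type]

lemma lt_of_transGen {α : Type} {r : α → α → Prop} (f : α → ℕ) (h : ∀ a b, r a b → f a < f b)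
    {a b : α} (hab : Relation.TransGen r a b) : f a < f b := by
  induction hab with
  | single h1 => exact h _ _ h1
  | tail _ h1 ih => exact ih.trans (h _ _ h1)

lemma exists_end_zero {s : ℕ} {t : EndLabel → Fin (s + 2)} (hs : s < 2)
    (hc : ∀ j : Fin (s + 1), fiberCard t j.succ < leafDiv s) : ∃ i, t i = 0 := by
  have h := fiberCard_zero_add t
  by_contra! h0
  have : fiberCard t 0 = 0 := by simp [fiberCard, h0]
  obtain rfl | rfl : s = 0 ∨ s = 1 := by omega
  · have := hc 0
    simp [leafDiv] at *; omega
  · have := hc 0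
    have := hc 1
    simp [leafDiv, Fin.sum_univ_two] at *; omega

namespace StarLayout

variable {G : WOGraph} {s : ℕ} {t : EndLabel → Fin (s + 2)} (L : StarLayout G s t)
include L

lemma adj_iff (e) (v) : G.Adj (L.fE e) (L.fV v) ↔ starSrc s e = v ∨ starTgt s t e = v := by
  simp [WOGraph.Adj, L.src_eq, L.tgt_eq]

lemma infVert_end (i : EndLabel) : G.InfVert (L.fV (Sum.inr i)) := by
  constructor
  · unfold WOGraph.IsLeaf WOGraph.degree
    have h1 : (Finset.univ.filter fun e => G.src e = L.fV (Sum.inr i)) = {L.fE (Sum.inr i)} := by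
      ext e
      obtain ⟨e, rfl⟩ := L.fE.surjective e
      rcases e with e | e <;> simp [L.src_eq, starSrc]
    have h2 : (Finset.univ.filter fun e => G.tgt e = L.fV (Sum.inr i)) = ∅ := by
      ext e
      obtain ⟨e, rfl⟩ := L.fE.surjective e
      rcases e with e | e <;> simp [L.tgt_eq, starTgt]
    rw [h1, h2]
    simp
  · intro e he
    obtain ⟨e, rfl⟩ := L.fE.surjective e
    rw [L.adj_iff] at he
    rcases e with e | e <;> simp_all [L.src_eq, starSrc, starTgt]

lemma not_infVert_succ (j : Fin (s + 1)) : ¬ G.InfVert (L.fV (Sum.inl j.succ)) := by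
  intro h
  have := h.2 (L.fE (Sum.inl j)) ((L.adj_iff _ _).2 (Or.inr rfl))
  rw [L.src_eq] at this
  simp [starSrc] at this
  exact (Fin.succ_ne_zero j) this.symm

lemma not_infVert_zero (i : EndLabel) (h : t i = 0) : ¬ G.InfVert (L.fV (Sum.inl 0)) := by
  intro h'
  have := h'.2 (L.fE (Sum.inr i)) ((L.adj_iff _ _).2 (Or.inr (by simp [starTgt, h])))
  rw [L.src_eq] at this
  simp [starSrc] at this

lemma div_eq (v) : G.div (L.fV v) =
    (∑ e, if starTgt s t e = v then (G.w (L.fE e) : ℤ) else 0) -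
      ∑ e, if starSrc s e = v then (G.w (L.fE e) : ℤ) else 0 := by
  unfold WOGraph.div
  rw [Finset.sum_filter, Finset.sum_filter, ← Equiv.sum_comp L.fE, ← Equiv.sum_comp L.fE]
  simp [L.src_eq, L.tgt_eq]

lemma div_end (i : EndLabel) : G.div (L.fV (Sum.inr i)) = -1 := by
  rw [L.div_eq, Fintype.sum_sum_type, Fintype.sum_sum_type]
  simp [starSrc, starTgt, L.w_end]

lemma div_succ (j : Fin (s + 1)) : G.div (L.fV (Sum.inl j.succ)) =
    G.w (L.fE (Sum.inl j)) + fiberCard t j.succ := by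
  rw [L.div_eq, fiberCard_sum, Fintype.sum_sum_type, Fintype.sum_sum_type]
  simp [starSrc, starTgt, L.w_end, (Fin.succ_ne_zero j).symm, fiberCard]

lemma div_zero : G.div (L.fV (Sum.inl 0)) =
    fiberCard t 0 - ∑ j, (G.w (L.fE (Sum.inl j)) : ℤ) := by
  rw [L.div_eq, fiberCard_sum, Fintype.sum_sum_type, Fintype.sum_sum_type]
  simp [starSrc, starTgt, L.w_end, fiberCard]

lemma card_vert : G.nV = s + 10 := by
  simpa using (Fintype.card_congr L.fV).symm

lemma card_edge : G.nE = s + 9 := by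
  simpa using (Fintype.card_congr L.fE).symm

lemma connected : G.Connected := by
  refine ⟨by have := L.card_vert; omega, ?_⟩
  have sym : Std.Symm G.connStep := ⟨fun u v ⟨e, he⟩ => ⟨e, he.symm⟩⟩
  have key : ∀ v, Relation.ReflTransGen G.connStep v (L.fV (Sum.inl 0)) := by
    have hfl : ∀ j, Relation.ReflTransGen G.connStep (L.fV (Sum.inl j)) (L.fV (Sum.inl 0)) := by
      intro j
      refine Fin.cases Relation.ReflTransGen.refl (fun j => ?_) j
      refine Relation.ReflTransGen.single ⟨L.fE (Sum.inl j), Or.inr ?_⟩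
      simp [L.src_eq, L.tgt_eq, starSrc, starTgt]
    intro v
    obtain ⟨v, rfl⟩ := L.fV.surjective v
    rcases v with j | i
    · exact hfl j
    · refine Relation.ReflTransGen.head ⟨L.fE (Sum.inr i), Or.inl ?_⟩ (hfl (t i))
      simp [L.src_eq, L.tgt_eq, starSrc, starTgt]
  intro u v
  exact (key u).trans (symm (key v))

lemma acyclic : G.Acyclic := by
  intro v hv
  refine lt_irrefl _ (lt_of_transGen (fun v =>
    Sum.elim (fun j : Fin (s + 2) => if j = 0 then 1 else 2) (fun _ => 0) (L.fV.symm v)) ?_ hv)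
  rintro _ _ ⟨e, rfl, rfl⟩
  obtain ⟨e, rfl⟩ := L.fE.surjective e
  rcases e with e | e
  · simp [L.src_eq, L.tgt_eq, starSrc, starTgt]
  · simp only [L.src_eq, L.tgt_eq, starSrc, starTgt, Equiv.symm_apply_apply, Sum.elim_inr,
      Sum.elim_inl]
    split_ifs <;> simp

lemma infVert_iff (h0 : ∃ i, t i = 0) (v) : G.InfVert (L.fV v) ↔ v.isRight := by
  rcases v with j | i
  · simp only [Sum.isRight_inl, Bool.false_eq_true, iff_false]
    obtain ⟨i, hi⟩ := h0
    exact Fin.cases (L.not_infVert_zero i hi) L.not_infVert_succ j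
  · simp [L.infVert_end]

lemma infEdge_iff (h0 : ∃ i, t i = 0) (e) : G.InfEdge (L.fE e) ↔ e.isRight := by
  constructor
  · rintro ⟨v, hv, hi⟩
    obtain ⟨v, rfl⟩ := L.fV.surjective v
    rw [L.infVert_iff h0] at hi
    rw [L.adj_iff] at hv
    rcases e with e | e <;> rcases v with v | v <;> simp_all [starSrc, starTgt]
  · intro h
    rcases e with e | i
    · simp at h
    · exact ⟨_, (L.adj_iff _ _).2 (Or.inl rfl), L.infVert_end i⟩

lemma div_zero_eq_four (hs : s < 2) (hc : ∀ j : Fin (s + 1), fiberCard t j.succ < leafDiv s)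
    (hw : ∀ j, G.w (L.fE (Sum.inl j)) = leafDiv s - fiberCard t j.succ) :
    G.div (L.fV (Sum.inl 0)) = 4 := by
  have h := fiberCard_zero_add t
  rw [L.div_zero]
  obtain rfl | rfl : s = 0 ∨ s = 1 := by omega
  · have := hc 0
    have := hw 0
    simp [leafDiv] at *; omega
  · have := hc 0
    have := hw 0
    have := hc 1
    have := hw 1
    simp [leafDiv, Fin.sum_univ_two] at *; omega

lemma div_succ_eq_leafDiv (hc : ∀ j : Fin (s + 1), fiberCard t j.succ < leafDiv s)
    (hw : ∀ j, G.w (L.fE (Sum.inl j)) = leafDiv s - fiberCard t j.succ) (j : Fin (s + 1)) :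
    G.div (L.fV (Sum.inl j.succ)) = leafDiv s := by
  have := hc j
  rw [L.div_succ, hw]
  omega

lemma isFloorDiagram (hs : s < 2) (hc : ∀ j : Fin (s + 1), fiberCard t j.succ < leafDiv s)
    (hw : ∀ j, G.w (L.fE (Sum.inl j)) = leafDiv s - fiberCard t j.succ) :
    IsFloorDiagram G 0 4 := by
  have h0 := exists_end_zero hs hc
  refine ⟨L.connected, L.acyclic, ?_, ?_, ?_, ?_, ?_⟩
  · rw [L.card_vert, L.card_edge]
  · intro v hv
    obtain ⟨v, rfl⟩ := L.fV.surjective v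
    rw [L.infVert_iff h0] at hv
    rcases v with v | v
    · refine Fin.cases ?_ (fun j => ?_) v
      · exact Or.inr (L.div_zero_eq_four hs hc hw)
      · rw [L.div_succ_eq_leafDiv hc hw, leafDiv]
        split_ifs <;> simp
    · simp at hv
  · intro v hv
    obtain ⟨v, rfl⟩ := L.fV.surjective v
    rw [L.infVert_iff h0] at hv
    rcases v with v | v
    · simp at hv
    · rw [L.div_end]
  · intro v hv hd e he
    obtain ⟨v, rfl⟩ := L.fV.surjective v
    obtain ⟨e, rfl⟩ := L.fE.surjective e
    rw [L.infVert_iff h0] at hv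
    rw [L.adj_iff] at he
    rw [L.tgt_eq]
    rcases he with he | he
    · rcases e with e | e
      · subst he
        rw [show starSrc s (Sum.inl e) = Sum.inl 0 from rfl, L.div_zero_eq_four hs hc hw] at hd
        norm_num at hd
      · subst he
        simp [starSrc] at hv
    · rw [he]
  · rw [Finset.sum_filter, ← Equiv.sum_comp L.fV, Fintype.sum_sum_type]
    simp [L.infVert_iff h0, L.div_end]

end StarLayout

/-- Marked floor diagrams of genus `0` and type `(∅, (1, 1))` for the class
`4[L] − Σ_{i=1}^6 [E_i]`. -/
abbrev MarkedQuartic := MarkedFD 6 0 4 (fun _ => 1) [] [1, 1]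

/-- The positions in `A₀` of the three marked elements other than the ends. -/
def corePos : Fin 10 → Fin 3 → Fin 5 :=
  ![![2, 3, 4], ![1, 3, 4], ![1, 2, 4], ![1, 2, 3], ![0, 3, 4], ![0, 2, 4], ![0, 2, 3],
    ![0, 1, 4], ![0, 1, 3], ![0, 1, 2]]

/-- The positions in `A₀` of the two marked ends. -/
def endPos : Fin 10 → Fin 2 → Fin 5 :=
  ![![0, 1], ![0, 2], ![0, 3], ![0, 4], ![1, 2], ![1, 3], ![1, 4], ![2, 3], ![2, 4], ![3, 4]]

/-- The positions in `A₀` of all marked elements. -/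
def markPos (k : Fin 10) : Fin 3 ⊕ Fin 2 → Fin 5 := Sum.elim (corePos k) (endPos k)

/-- Vertices and edges of the model star diagram. -/
abbrev StarElt (s : ℕ) := (Fin (s + 2) ⊕ EndLabel) ⊕ (Fin (s + 1) ⊕ EndLabel)

/-- The elements of the model star diagram marked by `A₀`. -/
def markedElt (s : ℕ) : Fin 3 ⊕ Fin 2 → StarElt s :=
  Sum.elim ![Sum.inl (Sum.inl 0), Sum.inr (Sum.inl 0),
      if s = 0 then Sum.inl (Sum.inl (Fin.last _)) else Sum.inr (Sum.inl (Fin.last _))]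
    (fun i => Sum.inr (Sum.inr (Sum.inl i)))

/-- The combinatorial data which occur for marked floor diagrams. -/
structure Admissible (s : ℕ) (k : Fin 10) (t : EndLabel → Fin (s + 2)) : Prop where
  lt_root : ∀ i : Fin 2, t (Sum.inl i) = 0 → endPos k i < corePos k 0
  lt_leaf : s = 0 → ∀ i : Fin 2, t (Sum.inl i) ≠ 0 → endPos k i < corePos k 2
  card_lt : ∀ j : Fin (s + 1), fiberCard t j.succ < leafDiv s

/-- An identification of a marked floor diagram with a marked star diagram. -/
structure Presentation (X : MarkedQuartic) (s : ℕ) (k : Fin 10) (t : EndLabel → Fin (s + 2))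
    extends StarLayout X.G s t where
  w_int : ∀ j, X.G.w (fE (Sum.inl j)) = leafDiv s - fiberCard t j.succ
  mark_zero : ∀ r, X.m (Sum.inl (markPos k r)) = Sum.map fV fE (markedElt s r)
  mark_exc : ∀ j, X.m (Sum.inr ⟨j, 0⟩) = Sum.inl (fV (Sum.inr (Sum.inr j)))

lemma markPos_bijective : ∀ k, Function.Bijective (markPos k) := by decide

lemma corePos_strictMono : ∀ k, corePos k 0 < corePos k 1 ∧ corePos k 1 < corePos k 2 := by decide

lemma markedElt_injective {s : ℕ} (hs : s < 2) : Function.Injective (markedElt s) := by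
  interval_cases s <;> decide

lemma markedElt_ne_end {s : ℕ} (r) (i : EndLabel) : markedElt s r ≠ Sum.inl (Sum.inr i) := by
  rcases r with r | r
  · fin_cases r <;> simp [markedElt]
    split_ifs <;> simp
  · simp [markedElt]

lemma markedElt_ne_exc {s : ℕ} (r) (j : Fin 6) :
    markedElt s r ≠ Sum.inr (Sum.inr (Sum.inr j)) := by
  rcases r with r | r
  · fin_cases r <;> simp [markedElt]
    split_ifs <;> simp
  · simp [markedElt]

/-- A function increasing along the orientation of the model star diagram which extends the
order of the marking. -/
def starRank (s : ℕ) (k : Fin 10) : StarElt s → ℕ :=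
  Sum.elim
    (Sum.elim (fun j => if j = 0 then corePos k 0 + 2 else if s = 0 then corePos k 2 + 2 else 100)
      (fun _ => 0))
    (Sum.elim (fun j => if j = 0 then corePos k 1 + 2 else corePos k 2 + 2)
      (Sum.elim (fun i => endPos k i + 2) (fun _ => 1)))

lemma starRank_markedElt {s : ℕ} (hs : s < 2) (k : Fin 10) (r) :
    starRank s k (markedElt s r) = markPos k r + 2 := by
  rcases r with r | r
  · interval_cases s <;> fin_cases r <;> simp [markedElt, starRank, markPos]
  · simp [markedElt, starRank, markPos]

lemma starRank_lt_starRank_src {s : ℕ} (k : Fin 10) (e) :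
    starRank s k (Sum.inl (starSrc s e)) < starRank s k (Sum.inr e) := by
  have := corePos_strictMono k
  rcases e with j | i | i
  · simp only [starSrc, starRank, Sum.elim_inl, Sum.elim_inr, if_true]
    split_ifs <;> omega
  · simp [starSrc, starRank]
  · simp [starSrc, starRank]

lemma starRank_lt_starRank_tgt {s : ℕ} (hs : s < 2) {k : Fin 10} {t : EndLabel → Fin (s + 2)}
    (h : Admissible s k t) (e) :
    starRank s k (Sum.inr e) < starRank s k (Sum.inl (starTgt s t e)) := by
  have := corePos_strictMono k
  rcases e with j | i | i
  · simp only [starTgt, starRank, Sum.elim_inl, Sum.elim_inr, Fin.succ_ne_zero, if_false]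
    split_ifs with h1 h2 h2
    · omega
    · omega
    · subst h2
      exact absurd (Subsingleton.elim (α := Fin 1) j 0) h1
    · omega
  · have h1 := h.lt_root i
    have h2 := fun hs => h.lt_leaf hs i
    simp only [starTgt, starRank, Sum.elim_inl, Sum.elim_inr]
    split_ifs with h3 h4
    · have := h1 h3
      omega
    · have := h2 h4 h3
      omega
    · omega
  · simp only [starTgt, starRank, Sum.elim_inl, Sum.elim_inr]
    split_ifs <;> omega

lemma markedElt_eq_leaf {s : ℕ} {r} {j : Fin (s + 1)}
    (h : markedElt s r = Sum.inl (Sum.inl j.succ)) : s = 0 := by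
  by_contra hs
  rcases r with r | r
  · fin_cases r <;> simp [markedElt, hs, (Fin.succ_ne_zero j).symm] at h
  · simp [markedElt] at h

lemma markedElt_isRight {s : ℕ} {r} {i : EndLabel} :
    markedElt s r = Sum.inr (Sum.inr i) ↔ ∃ i', r = Sum.inr i' ∧ i = Sum.inl i' := by
  rcases r with r | r
  · fin_cases r <;> simp [markedElt]
    split_ifs <;> simp
  · simp [markedElt, eq_comm]

namespace StarLayout

variable {G : WOGraph} {s : ℕ} {k : Fin 10} {t : EndLabel → Fin (s + 2)} (L : StarLayout G s t)
include L

lemma isMarking (hs : s < 2) (h : Admissible s k t)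
    (hw : ∀ j, G.w (L.fE (Sum.inl j)) = leafDiv s - fiberCard t j.succ)
    (m : MarkDom 6 0 4 (fun _ => 1) 0 2 → Fin G.nV ⊕ Fin G.nE)
    (m_zero : ∀ r, m (Sum.inl (markPos k r)) = Sum.map L.fV L.fE (markedElt s r))
    (m_exc : ∀ j, m (Sum.inr ⟨j, 0⟩) = Sum.inl (L.fV (Sum.inr (Sum.inr j)))) :
    IsMarking 6 0 4 (fun _ => 1) [] [1, 1] G m := by
  have h0 := exists_end_zero hs h.card_lt
  have hmap : Function.Injective (Sum.map L.fV L.fE) :=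
    Sum.map_injective.2 ⟨L.fV.injective, L.fE.injective⟩
  have posSurj : ∀ i : Fin (4 + 0 + 0 + 2 - 1), ∃ r, markPos k r = i :=
    (markPos_bijective k).2
  have m_exc' : ∀ (j : Fin 6) (p : Fin 1),
      m (Sum.inr ⟨j, p⟩) = Sum.map L.fV L.fE (Sum.inl (Sum.inr (Sum.inr j))) := by
    intro j p
    rw [Subsingleton.elim p 0]
    exact m_exc j
  have m_zero_ne : ∀ i v, G.InfVert v → m (Sum.inl i) ≠ Sum.inl v := by
    intro i v hv
    obtain ⟨r, rfl⟩ := posSurj i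
    obtain ⟨v, rfl⟩ := L.fV.surjective v
    rw [L.infVert_iff h0] at hv
    rcases v with v | v
    · simp at hv
    · rw [m_zero,
        show Sum.inl (L.fV (Sum.inr v)) = Sum.map L.fV L.fE (Sum.inl (Sum.inr v)) from rfl,
        hmap.ne_iff]
      exact markedElt_ne_end _ _
  refine ⟨?_, ?_, ?_, ?_, ?_, ?_, ?_, ?_, ?_⟩
  · rintro (i | ⟨i, p⟩) (j | ⟨j, q⟩) hij
    · obtain ⟨r, rfl⟩ := posSurj i
      obtain ⟨r', rfl⟩ := posSurj j
      rw [m_zero, m_zero] at hij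
      rw [markedElt_injective hs (hmap hij)]
    · obtain ⟨r, rfl⟩ := posSurj i
      rw [m_zero, m_exc'] at hij
      exact absurd (hmap hij) (markedElt_ne_end _ _)
    · obtain ⟨r, rfl⟩ := posSurj j
      rw [m_zero, m_exc'] at hij
      exact absurd (hmap hij).symm (markedElt_ne_end _ _)
    · rw [m_exc', m_exc'] at hij
      have := hmap hij
      simp only [Sum.inl.injEq, Sum.inr.injEq] at this
      subst this
      rw [Subsingleton.elim p q]
  · intro i j hij
    obtain ⟨r, rfl⟩ := posSurj i
    obtain ⟨r', rfl⟩ := posSurj j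
    have := lt_of_transGen (fun x => starRank s k (Sum.map L.fV.symm L.fE.symm x)) ?_ hij
    · simp only [List.length_nil, m_zero, Sum.map_map, Equiv.symm_comp_self, Sum.map_id_id, id,
        starRank_markedElt hs] at this
      exact Fin.lt_def.2 (by omega)
    · rintro (a | a) (b | b) hab
      · exact hab.elim
      · obtain ⟨a, rfl⟩ := L.fV.surjective a
        obtain ⟨b, rfl⟩ := L.fE.surjective b
        have hab : G.src (L.fE b) = L.fV a := hab
        rw [L.src_eq, L.fV.apply_eq_iff_eq] at hab
        subst hab
        simpa using starRank_lt_starRank_src k b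
      · obtain ⟨a, rfl⟩ := L.fE.surjective a
        obtain ⟨b, rfl⟩ := L.fV.surjective b
        have hab : G.tgt (L.fE a) = L.fV b := hab
        rw [L.tgt_eq, L.fV.apply_eq_iff_eq] at hab
        subst hab
        simpa using starRank_lt_starRank_tgt hs h a
      · exact hab.elim
  · rintro v hv hd (i | ⟨i, p⟩) hp
    · obtain ⟨r, rfl⟩ := posSurj i
      obtain ⟨v, rfl⟩ := L.fV.surjective v
      rw [L.infVert_iff h0] at hv
      rcases v with v | v
      · rw [m_zero, show Sum.inl (L.fV (Sum.inl v)) = Sum.map L.fV L.fE (Sum.inl (Sum.inl v)) from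
          rfl, hmap.eq_iff] at hp
        revert hp hd
        refine Fin.cases ?_ (fun j => ?_) v
        · intro hd
          rw [L.div_zero_eq_four hs h.card_lt hw] at hd
          norm_num at hd
        · intro hd hp
          obtain rfl := markedElt_eq_leaf hp
          rw [L.div_succ_eq_leafDiv h.card_lt hw] at hd
          norm_num [leafDiv] at hd
      · simp at hv
    · rw [m_exc'] at hp
      simp only [Sum.map_inl, Sum.inl.injEq] at hp
      exact hv (hp ▸ L.infVert_end _)
  · intro v hv e he
    obtain ⟨v, rfl⟩ := L.fV.surjective v
    obtain ⟨e, rfl⟩ := L.fE.surjective e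
    rw [L.infVert_iff h0] at hv
    rw [L.adj_iff] at he
    rcases v with v | v
    · simp at hv
    obtain rfl : e = Sum.inr v := by
      rcases e with e | e
      · simp [starSrc, starTgt] at he
      · simpa [starSrc, starTgt] using he
    rcases v with i | j
    · refine Or.inr ⟨⟨Sum.inl (markPos k (Sum.inr i)), m_zero _⟩, ?_⟩
      rintro ⟨i' | ⟨j, p⟩, hp⟩
      · exact m_zero_ne _ _ (L.infVert_end _) hp
      · rw [m_exc'] at hp
        simp at hp
    · refine Or.inl ⟨⟨_, m_exc j⟩, ?_⟩
      rintro ⟨i' | ⟨j, p⟩, hp⟩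
      · obtain ⟨r, rfl⟩ := posSurj i'
        rw [m_zero] at hp
        exact markedElt_ne_exc r j (hmap hp)
      · rw [m_exc'] at hp
        simp at hp
  · exact fun i p => ⟨_, L.infVert_end (Sum.inr i), m_exc' i p⟩
  · intro i
    simp only [List.length_nil, not_lt_zero, iff_false]
    rintro ⟨v, hv, hm⟩
    exact m_zero_ne i v hv hm
  · have key : ∀ (i : Fin 6) (e : Fin G.nE),
        (∃ (p : Fin 1) (u : Fin G.nV), m (Sum.inr ⟨i, p⟩) = Sum.inl u ∧ G.Adj e u) →
          e = L.fE (Sum.inr (Sum.inr i)) := by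
      rintro i e ⟨p, u, hu, he⟩
      rw [m_exc'] at hu
      simp only [Sum.map_inl, Sum.inl.injEq] at hu
      subst hu
      obtain ⟨e, rfl⟩ := L.fE.surjective e
      rw [L.adj_iff] at he
      rcases e with e | e <;> simp_all [starSrc, starTgt]
    intro i v _ e e' _ _ h1 h2
    rw [key i e h1, key i e' h2]
  · intro i hi
    simp at hi
  · have : (Finset.univ.filter fun e : Fin G.nE => G.InfEdge e ∧
        ∃ i : Fin (4 + 0 + 0 + 2 - 1), m (Sum.inl i) = Sum.inr e) =
          {L.fE (Sum.inr (Sum.inl 0)), L.fE (Sum.inr (Sum.inl 1))} := by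
      ext e
      obtain ⟨e, rfl⟩ := L.fE.surjective e
      have : (∃ i : Fin (4 + 0 + 0 + 2 - 1), m (Sum.inl i) = Sum.inr (L.fE e)) ↔
          ∃ r, markedElt s r = Sum.inr e := by
        constructor
        · rintro ⟨i, hi⟩
          obtain ⟨r, rfl⟩ := posSurj i
          rw [m_zero] at hi
          exact ⟨r, hmap hi⟩
        · rintro ⟨r, hr⟩
          exact ⟨markPos k r, by rw [m_zero, hr]; rfl⟩
      rw [Finset.mem_filter, this, L.infEdge_iff h0]
      rcases e with e | e
      · simp
      · simp only [markedElt_isRight]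
        simp
    exact (congrArg (fun A : Finset (Fin G.nE) => A.val.map G.w) this).trans (by
      rw [Finset.insert_val_of_notMem (by simp)]
      simp [L.w_end]
      rfl)

end StarLayout

/-- The numbering of the vertices of a star diagram. -/
def starVertEquiv (s : ℕ) : Fin (s + 2) ⊕ EndLabel ≃ Fin (s + 2 + (2 + 6)) :=
  (Equiv.sumCongr (Equiv.refl _) finSumFinEquiv).trans finSumFinEquiv

/-- The numbering of the edges of a star diagram. -/
def starEdgeEquiv (s : ℕ) : Fin (s + 1) ⊕ EndLabel ≃ Fin (s + 1 + (2 + 6)) :=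
  (Equiv.sumCongr (Equiv.refl _) finSumFinEquiv).trans finSumFinEquiv

/-- The star diagram with bounded edges of weights `w` and ends attached according to `t`. -/
def starGraph (s : ℕ) (t : EndLabel → Fin (s + 2)) (w : Fin (s + 1) → ℕ) (hw : ∀ j, 0 < w j) :
    WOGraph where
  nV := s + 2 + (2 + 6)
  nE := s + 1 + (2 + 6)
  src e := starVertEquiv s (starSrc s ((starEdgeEquiv s).symm e))
  tgt e := starVertEquiv s (starTgt s t ((starEdgeEquiv s).symm e))
  w e := Sum.elim w (fun _ => 1) ((starEdgeEquiv s).symm e)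
  w_pos e := by
    rcases (starEdgeEquiv s).symm e with j | i
    · exact hw j
    · exact one_pos

lemma starGraph_w (s : ℕ) (t : EndLabel → Fin (s + 2)) (w : Fin (s + 1) → ℕ)
    (hw : ∀ j, 0 < w j) (e) :
    (starGraph s t w hw).w (starEdgeEquiv s e) = Sum.elim w (fun _ => 1) e :=
  congrArg (Sum.elim w fun _ => 1) ((starEdgeEquiv s).symm_apply_apply e)

/-- The tautological layout of a star diagram. -/
def starGraphLayout (s : ℕ) (t : EndLabel → Fin (s + 2)) (w : Fin (s + 1) → ℕ)
    (hw : ∀ j, 0 < w j) : StarLayout (starGraph s t w hw) s t where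
  fV := starVertEquiv s
  fE := starEdgeEquiv s
  src_eq e := congrArg (fun x => starVertEquiv s (starSrc s x))
    ((starEdgeEquiv s).symm_apply_apply e)
  tgt_eq e :=
    congrArg (fun x => starVertEquiv s (starTgt s t x)) ((starEdgeEquiv s).symm_apply_apply e)
  w_end i := starGraph_w s t w hw (Sum.inr i)

lemma exists_presentation {s : ℕ} (hs : s < 2) {k : Fin 10} {t : EndLabel → Fin (s + 2)}
    (h : Admissible s k t) : ∃ X : MarkedQuartic, Nonempty (Presentation X s k t) := by
  let w : Fin (s + 1) → ℕ := fun j => leafDiv s - fiberCard t j.succ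
  have hw : ∀ j, 0 < w j := fun j => Nat.sub_pos_of_lt (h.card_lt j)
  let L := starGraphLayout s t w hw
  let pos := Equiv.ofBijective _ (markPos_bijective k)
  have w_int : ∀ j, (starGraph s t w hw).w (L.fE (Sum.inl j)) = leafDiv s - fiberCard t j.succ :=
    fun j => starGraph_w s t w hw (Sum.inl j)
  let m : MarkDom 6 0 4 (fun _ => 1) 0 2 → _ ⊕ _ :=
    Sum.elim (fun i : Fin 5 => Sum.map L.fV L.fE (markedElt s (pos.symm i)))
      (fun p => Sum.inl (L.fV (Sum.inr (Sum.inr p.1))))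
  have m_zero : ∀ r, m (Sum.inl (markPos k r)) = Sum.map L.fV L.fE (markedElt s r) := fun r =>
    congrArg (fun x => Sum.map L.fV L.fE (markedElt s x)) (pos.symm_apply_apply r)
  have m_exc : ∀ j, m (Sum.inr ⟨j, 0⟩) = Sum.inl (L.fV (Sum.inr (Sum.inr j))) := fun j => rfl
  exact ⟨⟨_, m, L.isFloorDiagram hs h.card_lt w_int, L.isMarking hs h w_int m m_zero m_exc⟩,
    ⟨⟨L, w_int, m_zero, m_exc⟩⟩⟩

lemma qInt_one : qInt 1 = 1 := by
  simp [qInt]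

namespace Presentation

variable {X Y : MarkedQuartic} {s : ℕ} {k : Fin 10} {t : EndLabel → Fin (s + 2)}

lemma equivalent (P : Presentation X s k t) (Q : Presentation Y s k t) : X.Equivalent Y := by
  refine ⟨P.fV.symm.trans Q.fV, P.fE.symm.trans Q.fE, Equiv.refl _, ?_, ?_, ?_, ?_, ?_, ?_⟩
  · intro e
    obtain ⟨e, rfl⟩ := P.fE.surjective e
    simp [P.src_eq, Q.src_eq]
  · intro e
    obtain ⟨e, rfl⟩ := P.fE.surjective e
    simp [P.tgt_eq, Q.tgt_eq]
  · intro e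
    obtain ⟨e, rfl⟩ := P.fE.surjective e
    rcases e with e | e
    · simp [P.w_int, Q.w_int]
    · simp [P.w_end, Q.w_end]
  · exact fun i => rfl
  · exact fun i p => ⟨p, rfl⟩
  · rintro (i | ⟨j, p⟩)
    · obtain ⟨r, rfl⟩ : ∃ r, markPos k r = i := (markPos_bijective k).2 i
      have h1 := P.mark_zero r
      have h2 := Q.mark_zero r
      rw [h1]
      refine h2.trans ?_
      rcases markedElt s r with a | a <;> simp
    · obtain rfl : p = 0 := Subsingleton.elim (α := Fin 1) p 0
      rw [P.mark_exc]
      refine (Q.mark_exc j).trans ?_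
      simp

lemma of_equivalent (h : X.Equivalent Y) (P : Presentation Y s k t) :
    Nonempty (Presentation X s k t) := by
  obtain ⟨φV, φE, ψ, hsrc, htgt, hw, hψ, hψ', hm⟩ := h
  have hm' : ∀ p, X.m p = Sum.map φV.symm φE.symm (Y.m (ψ p)) := by
    intro p
    rw [hm, Sum.map_map]
    simp
  refine ⟨⟨⟨P.fV.trans φV.symm, P.fE.trans φE.symm, ?_, ?_, ?_⟩, ?_, ?_, ?_⟩⟩
  · intro e
    apply φV.injective
    rw [← hsrc]
    simp [P.src_eq]
  · intro e
    apply φV.injective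
    rw [← htgt]
    simp [P.tgt_eq]
  · intro i
    rw [← hw]
    simp [P.w_end]
  · intro i
    rw [← hw]
    simp [P.w_int]
  · intro r
    refine (hm' (Sum.inl (markPos k r))).trans ?_
    rw [hψ]
    refine (congrArg _ (P.mark_zero r)).trans ?_
    rw [Sum.map_map]
    rfl
  · intro j
    obtain ⟨p, hp⟩ := hψ' j 0
    obtain rfl : p = 0 := Subsingleton.elim (α := Fin 1) p 0
    refine (hm' (Sum.inr ⟨j, 0⟩)).trans ?_
    rw [hp]
    exact (congrArg _ (P.mark_exc j)).trans rfl

lemma multq_eq (P : Presentation X s k t) (hs : s < 2) (h : Admissible s k t) :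
    X.multq = ∏ j : Fin (s + 1), qInt (leafDiv s - fiberCard t j.succ) ^ 2 := by
  have h0 := exists_end_zero hs h.card_lt
  have hw : ∀ e ∈ X.EdgeMu2, X.G.w e = 1 := by
    intro e he
    obtain ⟨e, rfl⟩ := P.fE.surjective e
    have := (Finset.mem_filter.1 he).2.1
    rw [P.infEdge_iff h0] at this
    rcases e with e | e
    · simp at this
    · exact P.w_end e
  have h1 : ∏ e ∈ X.EdgeMu2, (C ((X.G.w e : ℚ)⁻¹) * qInt (X.G.w e)) = 1 :=
    Finset.prod_eq_one fun e he => by simp [hw e he, qInt_one]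
  have h2 : ∏ e ∈ X.EdgeMu2, (C (X.G.w e : ℚ) : LaurentPolynomial ℚ) = 1 :=
    Finset.prod_eq_one fun e he => by simp [hw e he]
  have h3 : X.EdgeMu1 = ∅ := by
    simp [MarkedFD.EdgeMu1]
  rw [MarkedFD.multq, h1, h2, h3, MarkedFD.EdgeO, Finset.prod_filter, ← Equiv.prod_comp P.fE,
    Fintype.prod_sum_type]
  simp [P.infEdge_iff h0, P.w_int]

end Presentation

lemma endPos_injective : ∀ k k' : Fin 10, (∀ a, ∃ b, endPos k a = endPos k' b) → k = k' := by
  decide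

namespace Presentation

variable {X : MarkedQuartic} {s : ℕ} {k k' : Fin 10} {t t' : EndLabel → Fin (s + 2)}

lemma admissible (P : Presentation X s k t) : Admissible s k t := by
  have key : ∀ (i : Fin 2) (r : Fin 3),
      markedElt s (Sum.inl r) = Sum.inl (Sum.inl (t (Sum.inl i))) →
      endPos k i < corePos k r := by
    intro i r hr
    have h1 := P.mark_zero (Sum.inr i)
    have h2 := P.mark_zero (Sum.inl r)
    rw [hr] at h2
    refine X.marking.incr (endPos k i) (corePos k r) (Relation.TransGen.single ?_)
    have h3 : X.G.veStep (Sum.inr (P.fE (Sum.inr (Sum.inl i))))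
        (Sum.inl (P.fV (Sum.inl (t (Sum.inl i))))) := P.tgt_eq _
    exact h1 ▸ h2 ▸ h3
  refine ⟨fun i hi => key i 0 ?_, fun hs i hi => key i 2 ?_, fun j => ?_⟩
  · simp [markedElt, hi]
  · subst hs
    have : t (Sum.inl i) = Fin.last _ := by
      generalize t (Sum.inl i) = v at hi
      revert v
      decide
    simp [markedElt, this]
  · have := X.G.w_pos (P.fE (Sum.inl j))
    rw [P.w_int] at this
    omega

lemma index_eq (hs : s < 2) (P : Presentation X s k t) (Q : Presentation X s k' t') :
    k = k' := by
  have hP := exists_end_zero hs P.admissible.card_lt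
  have hQ := exists_end_zero hs Q.admissible.card_lt
  refine endPos_injective k k' fun a => ?_
  have h1 := P.mark_zero (Sum.inr a)
  obtain ⟨r, hr⟩ := (markPos_bijective k').2 (endPos k a)
  have h2 := Q.mark_zero r
  rw [hr] at h2
  have h3 : Sum.map Q.fV Q.fE (markedElt s r) = Sum.inr (P.fE (Sum.inr (Sum.inl a))) :=
    h2.symm.trans h1
  have hinf := (P.infEdge_iff hP (Sum.inr (Sum.inl a))).2 rfl
  rcases hre : markedElt s r with v | e
  · rw [hre] at h3
    simp at h3
  · rw [hre] at h3
    simp only [Sum.map_inr, Sum.inr.injEq] at h3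
    rw [← h3, Q.infEdge_iff hQ] at hinf
    rcases e with e | e
    · simp at hinf
    · obtain ⟨b, rfl, -⟩ := markedElt_isRight.1 hre
      exact ⟨b, hr.symm⟩

lemma attach_eq (hs : s < 2) (P : Presentation X s k t) (Q : Presentation X s k t') :
    t = t' := by
  have hmark : ∀ r, Sum.map P.fV P.fE (markedElt s r) = Sum.map Q.fV Q.fE (markedElt s r) :=
    fun r => (P.mark_zero r).symm.trans (Q.mark_zero r)
  have hexc : ∀ j, P.fV (Sum.inr (Sum.inr j)) = Q.fV (Sum.inr (Sum.inr j)) :=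
    fun j => Sum.inl_injective ((P.mark_exc j).symm.trans (Q.mark_exc j))
  have hend : ∀ i, P.fE (Sum.inr i) = Q.fE (Sum.inr i) := by
    rintro (a | j)
    · exact Sum.inr_injective (hmark (Sum.inr a))
    · obtain ⟨e, he⟩ := Q.fE.surjective (P.fE (Sum.inr (Sum.inr j)))
      have h1 := congrArg X.G.src he
      rw [Q.src_eq, P.src_eq] at h1
      have h2 := Q.fV.injective (h1.trans (hexc j))
      rw [← he]
      rcases e with e | e
      · simp [starSrc] at h2
      · simp only [starSrc, Sum.elim_inr, Sum.inr.injEq] at h2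
        rw [h2]
  have hzero : P.fV (Sum.inl 0) = Q.fV (Sum.inl 0) := Sum.inl_injective (hmark (Sum.inl 0))
  have hint : ∀ j : Fin (s + 1), P.fE (Sum.inl j) = Q.fE (Sum.inl j) →
      P.fV (Sum.inl j.succ) = Q.fV (Sum.inl j.succ) := by
    intro j hj
    have := congrArg X.G.tgt hj
    rwa [P.tgt_eq, Q.tgt_eq] at this
  have h1 := Sum.inr_injective (hmark (Sum.inl 1))
  have h2 := hmark (Sum.inl 2)
  have hfloor : ∀ v, P.fV (Sum.inl v) = Q.fV (Sum.inl v) := by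
    intro v
    refine Fin.cases hzero (fun j => hint j ?_) v
    obtain rfl | rfl : s = 0 ∨ s = 1 := by omega
    · obtain rfl : j = 0 := Subsingleton.elim (α := Fin 1) j 0
      exact h1
    · refine Fin.cases h1 (fun j => ?_) j
      obtain rfl : j = 0 := Subsingleton.elim (α := Fin 1) j 0
      exact Sum.inr_injective h2
  funext i
  have h3 := congrArg X.G.tgt (hend i)
  rw [P.tgt_eq, Q.tgt_eq] at h3
  simp only [starTgt, Sum.elim_inr] at h3
  rw [hfloor] at h3
  simpa using h3

end Presentation

namespace WOGraph

variable {G : WOGraph}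

lemma InfVert.tgt_ne {v} (h : G.InfVert v) (e) : G.tgt e ≠ v := by
  intro he
  have hs := h.2 e (Or.inr he)
  have h1 : 0 < (Finset.univ.filter fun e => G.src e = v).card :=
    Finset.card_pos.2 ⟨e, by simp [hs]⟩
  have h2 : 0 < (Finset.univ.filter fun e => G.tgt e = v).card :=
    Finset.card_pos.2 ⟨e, by simp [he]⟩
  have h3 : _ + _ = 1 := h.1
  omega

lemma InfVert.existsUnique_src {v} (h : G.InfVert v) : ∃! e, G.src e = v := by
  have h2 : (Finset.univ.filter fun e => G.tgt e = v) = ∅ := by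
    ext e
    simp [h.tgt_ne e]
  have h1 : (Finset.univ.filter fun e => G.src e = v).card + _ = 1 := h.1
  rw [h2, Finset.card_empty, add_zero] at h1
  obtain ⟨e, he⟩ := Finset.card_eq_one.1 h1
  have := fun e' => congrArg (e' ∈ ·) he
  simp only [Finset.mem_filter, Finset.mem_univ, true_and, Finset.mem_singleton, eq_iff_iff] at this
  exact ⟨e, (this e).2 rfl, fun e' => (this e').1⟩

lemma InfVert.div_src {e} (h : G.InfVert (G.src e)) : G.div (G.src e) = -G.w e := by
  have h2 : (Finset.univ.filter fun e' => G.tgt e' = G.src e) = ∅ := by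
    ext e'
    simp [h.tgt_ne e']
  have h1 : (Finset.univ.filter fun e' => G.src e' = G.src e) = {e} := by
    ext e'
    simp only [Finset.mem_filter, Finset.mem_univ, true_and, Finset.mem_singleton]
    exact ⟨fun h' => h.existsUnique_src.unique h' rfl, fun h' => h' ▸ rfl⟩
  simp [div, h1, h2]

lemma infEdge_iff_infVert_src {e} : G.InfEdge e ↔ G.InfVert (G.src e) := by
  constructor
  · rintro ⟨v, hv, h⟩
    rwa [h.2 e hv]
  · exact fun h => ⟨_, Or.inl rfl, h⟩

lemma sum_div : ∑ v, G.div v = 0 := by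
  unfold div
  rw [Finset.sum_sub_distrib, Finset.sum_fiberwise, Finset.sum_fiberwise, sub_self]

end WOGraph

/-- A labelling of the ends of a marked floor diagram compatible with the marking. -/
structure EndLabelling (X : MarkedQuartic) where
  endV : EndLabel → Fin X.G.nV
  endE : EndLabel → Fin X.G.nE
  pos : Fin 2 → Fin 5
  pos_lt : pos 0 < pos 1
  endV_injective : Function.Injective endV
  infVert_iff : ∀ v, X.G.InfVert v ↔ ∃ i, endV i = v
  src_eq : ∀ i, X.G.src (endE i) = endV i
  w_eq : ∀ i, X.G.w (endE i) = 1
  mark_edge : ∀ a, X.m (Sum.inl (pos a)) = Sum.inr (endE (Sum.inl a))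
  mark_vert : ∀ j, X.m (Sum.inr ⟨j, 0⟩) = Sum.inl (endV (Sum.inr j))

namespace EndLabelling

variable {X : MarkedQuartic} (N : EndLabelling X)
include N

lemma endE_injective : Function.Injective N.endE := fun i j h =>
  N.endV_injective (by rw [← N.src_eq, ← N.src_eq, h])

lemma infVert (i) : X.G.InfVert (N.endV i) := (N.infVert_iff _).2 ⟨i, rfl⟩

lemma infEdge_iff (e) : X.G.InfEdge e ↔ ∃ i, N.endE i = e := by
  rw [WOGraph.infEdge_iff_infVert_src, N.infVert_iff]
  refine exists_congr fun i => ⟨fun h => ?_, fun h => ?_⟩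
  · exact (N.infVert i).existsUnique_src.unique (N.src_eq i) h.symm
  · rw [← h, N.src_eq]

lemma card_infVert : (Finset.univ.filter fun v => X.G.InfVert v).card = 8 := by
  have : (Finset.univ.filter fun v => X.G.InfVert v) = Finset.univ.image N.endV := by
    ext v
    simp [N.infVert_iff]
  rw [this, Finset.card_image_of_injective _ N.endV_injective]
  simp

lemma card_infEdge : (Finset.univ.filter fun e => X.G.InfEdge e).card = 8 := by
  have : (Finset.univ.filter fun v => X.G.InfEdge v) = Finset.univ.image N.endE := by
    ext v
    simp [N.infEdge_iff]
  rw [this, Finset.card_image_of_injective _ N.endE_injective]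
  simp

end EndLabelling

lemma MarkedFD.exists_marked_ends (X : MarkedQuartic) :
    ∃ (x : Fin 2 → Fin 5) (y : Fin 2 → Fin X.G.nE), x 0 < x 1 ∧ Function.Injective y ∧
      (∀ a, X.m (Sum.inl (x a)) = Sum.inr (y a)) ∧ (∀ a, X.G.InfEdge (y a)) ∧
      ∀ e, X.G.InfEdge e → ∀ i : Fin 5, X.m (Sum.inl i) = Sum.inr e → ∃ a, y a = e := by
  have h := congrArg Multiset.card X.marking.mu2_edges
  rw [Multiset.card_map] at h
  obtain ⟨e, e', hne, hE⟩ := Finset.card_eq_two.1 h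
  have hmem : ∀ e'', (X.G.InfEdge e'' ∧ ∃ i : Fin 5, X.m (Sum.inl i) = Sum.inr e'') ↔
      e'' = e ∨ e'' = e' := by
    intro e''
    have := congrArg (e'' ∈ ·) hE
    simp only [Finset.mem_filter, Finset.mem_univ, true_and, Finset.mem_insert,
      Finset.mem_singleton, eq_iff_iff] at this
    exact this
  obtain ⟨he, i, hi⟩ := (hmem e).2 (Or.inl rfl)
  obtain ⟨he', i', hi'⟩ := (hmem e').2 (Or.inr rfl)
  have hii' : i ≠ i' := by
    rintro rfl
    exact hne (Sum.inr_injective (hi.symm.trans hi'))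
  rcases lt_or_gt_of_ne hii' with hlt | hlt
  · refine ⟨![i, i'], ![e, e'], hlt, ?_, ?_, ?_, ?_⟩
    · intro a b
      fin_cases a <;> fin_cases b <;> simp [hne, hne.symm]
    · intro a
      fin_cases a
      exacts [hi, hi']
    · intro a
      fin_cases a
      exacts [he, he']
    · intro e'' h1 j h2
      rcases (hmem e'').1 ⟨h1, j, h2⟩ with rfl | rfl
      exacts [⟨0, rfl⟩, ⟨1, rfl⟩]
  · refine ⟨![i', i], ![e', e], hlt, ?_, ?_, ?_, ?_⟩
    · intro a b
      fin_cases a <;> fin_cases b <;> simp [hne, hne.symm]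
    · intro a
      fin_cases a
      exacts [hi', hi]
    · intro a
      fin_cases a
      exacts [he', he]
    · intro e'' h1 j h2
      rcases (hmem e'').1 ⟨h1, j, h2⟩ with rfl | rfl
      exacts [⟨1, rfl⟩, ⟨0, rfl⟩]

lemma MarkedFD.mark_zero_ne (X : MarkedQuartic) (i : Fin 5) {v} (hv : X.G.InfVert v) :
    X.m (Sum.inl i) ≠ Sum.inl v := fun h =>
  absurd ((X.marking.mu1_vert i).1 ⟨v, hv, h⟩) (Nat.not_lt_zero _)

lemma MarkedFD.exists_endLabelling (X : MarkedQuartic) : Nonempty (EndLabelling X) := by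
  obtain ⟨x, y, hx, hy, hm, hinf, hall⟩ := X.exists_marked_ends
  choose u hu hmu using fun j : Fin 6 => X.marking.exc_vert j (0 : Fin 1)
  choose z hz using fun j => (hu j).existsUnique_src.exists
  let endV : EndLabel → Fin X.G.nV := Sum.elim (fun a => X.G.src (y a)) u
  let endE : EndLabel → Fin X.G.nE := Sum.elim y z
  have hsrc : ∀ i, X.G.src (endE i) = endV i := by
    rintro (a | j)
    exacts [rfl, hz j]
  have hV : ∀ i, X.G.InfVert (endV i) := by
    rintro (a | j)
    exacts [WOGraph.infEdge_iff_infVert_src.1 (hinf a), hu j]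
  have hsep : ∀ a j, X.G.src (y a) ≠ u j := by
    intro a j h
    have h1 : ∃ p, X.m p = Sum.inl (u j) := ⟨_, hmu j⟩
    have h2 : ∃ p, X.m p = Sum.inr (y a) := ⟨_, hm a⟩
    rcases X.marking.inf_pair _ (hu j) (y a) (Or.inl h) with h3 | h3
    · exact h3.2 h2
    · exact h3.2 h1
  have hinj : Function.Injective endV := by
    rintro (a | j) (b | l) h
    · exact congrArg _ (hy ((hV (Sum.inl a)).existsUnique_src.unique rfl h.symm))
    · exact absurd h (hsep a l)
    · exact absurd h.symm (hsep b j)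
    · have h1 : X.m (Sum.inr ⟨j, (0 : Fin 1)⟩) = X.m (Sum.inr ⟨l, (0 : Fin 1)⟩) :=
        (hmu j).trans ((congrArg Sum.inl h).trans (hmu l).symm)
      have h2 := congrArg Sigma.fst (Sum.inr_injective (X.marking.inj h1))
      exact congrArg (fun i : Fin 6 => (Sum.inr i : EndLabel)) h2
  have hiff : ∀ v, X.G.InfVert v ↔ ∃ i, endV i = v := by
    refine fun v => ⟨fun hv => ?_, fun ⟨i, hi⟩ => hi ▸ hV i⟩
    obtain ⟨e, rfl⟩ := hv.existsUnique_src.exists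
    rcases X.marking.inf_pair _ hv e (Or.inl rfl) with ⟨⟨p, hp⟩, -⟩ | ⟨⟨p, hp⟩, -⟩
    · rcases p with i | ⟨j, p⟩
      · exact absurd hp (X.mark_zero_ne i hv)
      · obtain rfl : p = (0 : Fin 1) := Subsingleton.elim (α := Fin 1) p 0
        exact ⟨Sum.inr j, Sum.inl_injective ((hmu j).symm.trans hp)⟩
    · rcases p with i | ⟨j, p⟩
      · obtain ⟨a, ha⟩ := hall e (WOGraph.infEdge_iff_infVert_src.2 hv) i hp
        exact ⟨Sum.inl a, congrArg X.G.src ha⟩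
      · obtain rfl : p = (0 : Fin 1) := Subsingleton.elim (α := Fin 1) p 0
        exact absurd ((hmu j).symm.trans hp) Sum.inl_ne_inr
  have hw : ∀ i, X.G.w (endE i) = 1 := by
    have htot := X.fd.total_div
    have himg : (Finset.univ.filter fun v => X.G.InfVert v) = Finset.univ.image endV := by
      ext v
      simp [hiff]
    rw [himg, Finset.sum_image hinj.injOn] at htot
    have hdiv : ∀ i, X.G.div (endV i) = -X.G.w (endE i) := by
      intro i
      have := hV i
      rw [← hsrc] at this ⊢
      exact this.div_src
    have hsum : ∑ i, ((X.G.w (endE i) : ℤ) - 1) = 0 := by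
      simp only [hdiv, Finset.sum_neg_distrib] at htot
      rw [Finset.sum_sub_distrib]
      simp
      simp at htot
      linarith
    have hnn : ∀ i ∈ Finset.univ, (0 : ℤ) ≤ (X.G.w (endE i) : ℤ) - 1 := by
      intro i _
      have := X.G.w_pos (endE i)
      omega
    intro i
    have := (Finset.sum_eq_zero_iff_of_nonneg hnn).1 hsum i (Finset.mem_univ i)
    omega
  exact ⟨⟨endV, endE, x, hx, hinj, hiff, hsrc, hw, hm, hmu⟩⟩

/-- The floors and the bounded edges of a marked floor diagram, arranged in a star. -/
structure Skeleton (X : MarkedQuartic) (s : ℕ) where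
  floor : Fin (s + 2) → Fin X.G.nV
  edge : Fin (s + 1) → Fin X.G.nE
  floor_injective : Function.Injective floor
  not_infVert : ∀ v, ¬ X.G.InfVert (floor v)
  src_eq : ∀ j : Fin (s + 1), X.G.src (edge j) = floor 0
  tgt_eq : ∀ j : Fin (s + 1), X.G.tgt (edge j) = floor j.succ
  card_vert : X.G.nV = s + 10
  card_edge : X.G.nE = s + 9
  div_zero : X.G.div (floor 0) = 4
  div_succ : ∀ j : Fin (s + 1), X.G.div (floor j.succ) = leafDiv s
  mark_lt : ∀ j j', j < j' → ∀ i i' : Fin 5, X.m (Sum.inl i) = Sum.inr (edge j) →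
    X.m (Sum.inl i') = Sum.inr (edge j') → i < i'

namespace EndLabelling

variable {X : MarkedQuartic} (N : EndLabelling X)
include N

lemma card_floor_add : 8 + (Finset.univ.filter fun v => ¬ X.G.InfVert v).card = X.G.nV := by
  rw [← N.card_infVert, Finset.card_filter_add_card_filter_not]
  simp

lemma card_bounded_add : 8 + (Finset.univ.filter fun e => ¬ X.G.InfEdge e).card = X.G.nE := by
  rw [← N.card_infEdge, Finset.card_filter_add_card_filter_not]
  simp

lemma card_bounded_succ : (Finset.univ.filter fun e => ¬ X.G.InfEdge e).card + 1 =
    (Finset.univ.filter fun v => ¬ X.G.InfVert v).card := by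
  have h1 := N.card_floor_add
  have h2 := N.card_bounded_add
  have h3 := X.fd.betti
  omega

end EndLabelling

namespace MarkedFD

variable {X : MarkedQuartic}

lemma card_floor_add_card_four (X : MarkedQuartic) :
    (Finset.univ.filter fun v => ¬ X.G.InfVert v).card +
    (Finset.univ.filter fun v => ¬ X.G.InfVert v ∧ X.G.div v = 4).card = 4 := by
  have h1 := X.G.sum_div
  rw [← Finset.sum_filter_add_sum_filter_not Finset.univ (fun v => X.G.InfVert v),
    X.fd.total_div] at h1
  have h2 : ∑ v ∈ Finset.univ.filter (fun v => ¬ X.G.InfVert v), X.G.div v =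
      ∑ v ∈ Finset.univ.filter (fun v => ¬ X.G.InfVert v),
        (2 + 2 * if X.G.div v = 4 then (1 : ℤ) else 0) := by
    refine Finset.sum_congr rfl fun v hv => ?_
    rcases X.fd.div_floor v (Finset.mem_filter.1 hv).2 with h | h <;> rw [h] <;> rfl
  rw [h2, Finset.sum_add_distrib, ← Finset.mul_sum, Finset.sum_boole, Finset.filter_filter,
    Finset.sum_const] at h1
  push_cast at h1
  simp only [nsmul_eq_mul] at h1
  omega

lemma div_src_of_not_infEdge {e} (he : ¬ X.G.InfEdge e) : X.G.div (X.G.src e) = 4 := by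
  have h := WOGraph.infEdge_iff_infVert_src.not.1 he
  refine (X.fd.div_floor _ h).resolve_left fun h2 => ?_
  exact X.fd.acyclic _ (.single ⟨e, rfl, X.fd.sink_of_two _ h h2 e (Or.inl rfl)⟩)

lemma src_ne_tgt (X : MarkedQuartic) (e) : X.G.src e ≠ X.G.tgt e :=
  fun h => X.fd.acyclic _ (.single ⟨e, h, rfl⟩)

lemma not_infVert_tgt (X : MarkedQuartic) (e) : ¬ X.G.InfVert (X.G.tgt e) :=
  fun h => h.tgt_ne e rfl

/-- Distinct bounded edges issued from the same floor have distinct targets, provided there is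
another floor besides these. -/
lemma tgt_ne_of_card_floor {e e' P} (h3 : (Finset.univ.filter fun v => ¬ X.G.InfVert v).card = 3)
    (hP : ¬ X.G.InfVert P)
    (hsrc : ∀ q, ¬ X.G.InfEdge q → X.G.src q = P) (hE : ∀ q, ¬ X.G.InfEdge q → q = e ∨ q = e') :
    X.G.tgt e ≠ X.G.tgt e' := by
  intro h
  obtain ⟨R, hR, hne⟩ : ∃ R ∈ Finset.univ.filter (fun v => ¬ X.G.InfVert v),
      R ∉ ({P, X.G.tgt e} : Finset _) :=
    Finset.exists_mem_notMem_of_card_lt_card (by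
      rw [h3]; exact Nat.lt_succ_of_le Finset.card_le_two)
  simp only [Finset.mem_filter, Finset.mem_univ, true_and, Finset.mem_insert,
    Finset.mem_singleton, not_or] at hR hne
  have hadj : ∀ q, ¬ X.G.InfEdge q → X.G.src q ≠ R ∧ X.G.tgt q ≠ R := by
    intro q hq
    refine ⟨fun h' => hne.1 (h'.symm.trans (hsrc q hq)), fun h' => hne.2 ?_⟩
    rcases hE q hq with rfl | rfl
    exacts [h'.symm, h'.symm.trans h.symm]
  have hinf : ∀ q, X.G.src q = R ∨ X.G.tgt q = R → X.G.InfVert (X.G.src q) := by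
    intro q hq
    rw [← WOGraph.infEdge_iff_infVert_src]
    by_contra hq'
    exact hq.elim (hadj q hq').1 (hadj q hq').2
  have key : ∀ v, Relation.ReflTransGen X.G.connStep R v →
      v = R ∨ ∃ q, X.G.src q = v ∧ X.G.InfVert v ∧ X.G.tgt q = R := by
    intro v hv
    induction hv with
    | refl => exact Or.inl rfl
    | tail _ hs ih =>
      obtain ⟨q, ⟨rfl, rfl⟩ | ⟨rfl, rfl⟩⟩ := hs
      · rcases ih with ih | ⟨q', h1, h2, h4⟩
        · exact absurd (hinf q (Or.inl ih)) (ih ▸ hR)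
        · obtain rfl := h2.existsUnique_src.unique h1 rfl
          exact Or.inl h4
      · rcases ih with ih | ⟨q', h1, h2, h4⟩
        · exact Or.inr ⟨q, rfl, hinf q (Or.inr ih), ih⟩
        · exact absurd h2 (X.not_infVert_tgt q)
  rcases key P (X.fd.conn.2 R P) with h' | ⟨q, -, h', -⟩
  exacts [hne.1 h'.symm, hP h']

end MarkedFD

namespace EndLabelling

variable {X : MarkedQuartic} (N : EndLabelling X)
include N

lemma exists_skeleton_of_card_two
    (h2 : (Finset.univ.filter fun v => ¬ X.G.InfVert v).card = 2) : Nonempty (Skeleton X 0) := by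
  have h4 := X.card_floor_add_card_four
  have h1 := N.card_bounded_succ
  obtain ⟨q, hq⟩ := Finset.card_pos.1
    (show 0 < (Finset.univ.filter fun e => ¬ X.G.InfEdge e).card by omega)
  have hq := (Finset.mem_filter.1 hq).2
  have hall : ∀ v, ¬ X.G.InfVert v → X.G.div v = 4 := by
    intro v hv
    have := Finset.eq_of_subset_of_card_le (Finset.monotone_filter_right Finset.univ
      fun v _ (h : ¬ X.G.InfVert v ∧ X.G.div v = 4) => h.1) (by omega)
    have h5 : v ∈ Finset.univ.filter fun v => ¬ X.G.InfVert v := by simpa using hv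
    rw [← this] at h5
    exact (Finset.mem_filter.1 h5).2.2
  have hs := WOGraph.infEdge_iff_infVert_src.not.1 hq
  have ht := X.not_infVert_tgt q
  have hV := N.card_floor_add
  have hE := N.card_bounded_add
  refine ⟨⟨![X.G.src q, X.G.tgt q], fun _ => q, ?_, ?_, ?_, ?_, by omega, by omega, hall _ hs,
    ?_, ?_⟩⟩
  · intro a b
    fin_cases a <;> fin_cases b <;> simp [X.src_ne_tgt q, (X.src_ne_tgt q).symm]
  · intro v
    fin_cases v
    exacts [hs, ht]
  · exact fun _ => rfl
  · intro j
    fin_cases j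
    rfl
  · intro j
    fin_cases j
    exact hall _ ht
  · intro j j' h
    exact absurd h (by omega)

lemma exists_skeleton_of_card_three
    (h3 : (Finset.univ.filter fun v => ¬ X.G.InfVert v).card = 3) : Nonempty (Skeleton X 1) := by
  have h4 := X.card_floor_add_card_four
  have h1 := N.card_bounded_succ
  obtain ⟨P, hP⟩ := Finset.card_eq_one.1
    (show (Finset.univ.filter fun v => ¬ X.G.InfVert v ∧ X.G.div v = 4).card = 1 by omega)
  obtain ⟨q, q', hqq', hQ⟩ := Finset.card_eq_two.1
    (show (Finset.univ.filter fun e => ¬ X.G.InfEdge e).card = 2 by omega)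
  replace hP : ∀ v, (¬ X.G.InfVert v ∧ X.G.div v = 4) ↔ v = P := by
    intro v
    simpa using congrArg (v ∈ ·) hP
  replace hQ : ∀ e, ¬ X.G.InfEdge e ↔ e = q ∨ e = q' := by
    intro e
    simpa using congrArg (e ∈ ·) hQ
  have hsrc : ∀ e, ¬ X.G.InfEdge e → X.G.src e = P := fun e he =>
    (hP _).1 ⟨WOGraph.infEdge_iff_infVert_src.not.1 he, X.div_src_of_not_infEdge he⟩
  obtain ⟨hP1, hP4⟩ := (hP P).2 rfl
  have hV := N.card_floor_add
  have hE := N.card_bounded_add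
  wlog horder : ∀ i i' : Fin 5, X.m (Sum.inl i) = Sum.inr q → X.m (Sum.inl i') = Sum.inr q' →
      i < i' generalizing q q'
  · refine this q' q hqq'.symm (fun e => by rw [hQ, or_comm]) fun a a' ha ha' => ?_
    push Not at horder
    obtain ⟨i, i', hi, hi', hle⟩ := horder
    have e1 : i' = a := Sum.inl_injective (X.marking.inj (hi'.trans ha.symm))
    have e2 : i = a' := Sum.inl_injective (X.marking.inj (hi.trans ha'.symm))
    subst e1 e2
    refine lt_of_le_of_ne hle ?_
    rintro rfl
    exact hqq' (Sum.inr_injective (hi.symm.trans hi'))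
  have hne := X.tgt_ne_of_card_floor h3 hP1 hsrc fun e => (hQ e).1
  have hq := (hQ q).2 (Or.inl rfl)
  have hq' := (hQ q').2 (Or.inr rfl)
  have hPq : ∀ e, ¬ X.G.InfEdge e → X.G.tgt e ≠ P := fun e he =>
    hsrc e he ▸ (X.src_ne_tgt e).symm
  have hdiv : ∀ e, ¬ X.G.InfEdge e → X.G.div (X.G.tgt e) = 2 := fun e he =>
    (X.fd.div_floor _ (X.not_infVert_tgt e)).resolve_right fun h =>
      hPq e he ((hP _).1 ⟨X.not_infVert_tgt e, h⟩)
  refine ⟨⟨![P, X.G.tgt q, X.G.tgt q'], ![q, q'], ?_, ?_, ?_, ?_, by omega, by omega, hP4,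
    ?_, ?_⟩⟩
  · intro a b
    fin_cases a <;> fin_cases b <;>
      simp [hPq q hq, hPq q' hq', (hPq q hq).symm, (hPq q' hq').symm, hne, hne.symm]
  · intro v
    fin_cases v
    exacts [hP1, X.not_infVert_tgt q, X.not_infVert_tgt q']
  · intro j
    fin_cases j
    exacts [hsrc q hq, hsrc q' hq']
  · intro j
    fin_cases j <;> rfl
  · intro j
    fin_cases j
    exacts [hdiv q hq, hdiv q' hq']
  · intro j j' h
    fin_cases j <;> fin_cases j' <;> first | exact absurd h (by decide) | exact horder

lemma exists_skeleton : ∃ s < 2, Nonempty (Skeleton X s) := by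
  have h4 := X.card_floor_add_card_four
  have h1 := N.card_bounded_succ
  have hle : (Finset.univ.filter fun v => ¬ X.G.InfVert v ∧ X.G.div v = 4).card ≤
      (Finset.univ.filter fun v => ¬ X.G.InfVert v).card :=
    Finset.card_le_card (Finset.monotone_filter_right Finset.univ
      fun v _ (h : ¬ X.G.InfVert v ∧ X.G.div v = 4) => h.1)
  by_cases h0 : (Finset.univ.filter fun v => ¬ X.G.InfVert v ∧ X.G.div v = 4).card = 0
  · obtain ⟨q, hq⟩ := Finset.card_pos.1
      (show 0 < (Finset.univ.filter fun e => ¬ X.G.InfEdge e).card by omega)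
    have hq := (Finset.mem_filter.1 hq).2
    rw [Finset.card_eq_zero] at h0
    have : X.G.src q ∈ Finset.univ.filter fun v => ¬ X.G.InfVert v ∧ X.G.div v = 4 := by
      simpa using ⟨WOGraph.infEdge_iff_infVert_src.not.1 hq, X.div_src_of_not_infEdge hq⟩
    simp [h0] at this
  · rcases (show (Finset.univ.filter fun v => ¬ X.G.InfVert v).card = 2 ∨
      (Finset.univ.filter fun v => ¬ X.G.InfVert v).card = 3 by omega) with h | h
    exacts [⟨0, by omega, N.exists_skeleton_of_card_two h⟩,
      ⟨1, by omega, N.exists_skeleton_of_card_three h⟩]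

end EndLabelling

lemma exists_markPos_eq : ∀ a b : Fin 5, a < b → ∀ c, b < c → ∀ d, d ≠ a ∧ d ≠ b ∧ d ≠ c →
    ∀ e, d < e → e ≠ a ∧ e ≠ b ∧ e ≠ c →
      ∃ k, (∀ i, ![a, b, c] i = corePos k i) ∧ ∀ i, ![d, e] i = endPos k i := by
  decide

lemma exists_eq_markPos {f : Fin 3 ⊕ Fin 2 → Fin 5} (hf : Function.Injective f)
    (h01 : f (Sum.inl 0) < f (Sum.inl 1)) (h12 : f (Sum.inl 1) < f (Sum.inl 2))
    (h : f (Sum.inr 0) < f (Sum.inr 1)) : ∃ k, f = markPos k := by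
  have hne : ∀ i j, f (Sum.inr i) ≠ f (Sum.inl j) := fun i j h => Sum.inr_ne_inl (hf h)
  obtain ⟨k, h1, h2⟩ := exists_markPos_eq _ _ h01 _ h12 _ ⟨hne 0 0, hne 0 1, hne 0 2⟩ _ h
    ⟨hne 1 0, hne 1 1, hne 1 2⟩
  refine ⟨k, funext ?_⟩
  rintro (r | r)
  · refine Eq.trans ?_ (h1 r)
    fin_cases r <;> rfl
  · refine Eq.trans ?_ (h2 r)
    fin_cases r <;> rfl

namespace Skeleton

variable {X : MarkedQuartic} {s : ℕ} (S : Skeleton X s) (N : EndLabelling X)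

lemma edge_injective : Function.Injective S.edge := fun j j' h =>
  Fin.succ_injective _ (S.floor_injective (by rw [← S.tgt_eq, ← S.tgt_eq, h]))

lemma not_infEdge (j) : ¬ X.G.InfEdge (S.edge j) := by
  rw [WOGraph.infEdge_iff_infVert_src, S.src_eq]
  exact S.not_infVert 0

lemma bijective_vert : Function.Bijective (Sum.elim S.floor N.endV) := by
  refine (Fintype.bijective_iff_injective_and_card _).2 ⟨?_, by simp [S.card_vert]⟩
  exact S.floor_injective.sumElim N.endV_injective
    fun v i h => S.not_infVert v (h ▸ N.infVert i)

lemma bijective_edge : Function.Bijective (Sum.elim S.edge N.endE) := by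
  refine (Fintype.bijective_iff_injective_and_card _).2 ⟨?_, by simp [S.card_edge]⟩
  exact S.edge_injective.sumElim N.endE_injective
    fun j i h => S.not_infEdge j ((N.infEdge_iff _).2 ⟨i, h.symm⟩)

lemma exists_starLayout : ∃ (t : EndLabel → Fin (s + 2)) (L : StarLayout X.G s t),
    (∀ v, L.fV (Sum.inl v) = S.floor v) ∧ (∀ i, L.fV (Sum.inr i) = N.endV i) ∧
    (∀ j, L.fE (Sum.inl j) = S.edge j) ∧ ∀ i, L.fE (Sum.inr i) = N.endE i := by
  have h : ∀ i, ∃ v, S.floor v = X.G.tgt (N.endE i) := by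
    intro i
    obtain ⟨v | i', h⟩ := (S.bijective_vert N).2 (X.G.tgt (N.endE i))
    · exact ⟨v, h⟩
    · exact absurd h.symm ((N.infVert i').tgt_ne _)
  choose t ht using h
  refine ⟨t, ⟨.ofBijective _ (S.bijective_vert N), .ofBijective _ (S.bijective_edge N),
    ?_, ?_, N.w_eq⟩, fun _ => rfl, fun _ => rfl, fun _ => rfl, fun _ => rfl⟩
  · rintro (j | i)
    exacts [S.src_eq j, N.src_eq i]
  · rintro (j | i)
    exacts [S.tgt_eq j, (ht i).symm]

variable {t : EndLabel → Fin (s + 2)} {L : StarLayout X.G s t}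

include S N in
lemma exists_markedElt (hs : s < 2) (hfloor : ∀ v, L.fV (Sum.inl v) = S.floor v)
    (hendV : ∀ i, L.fV (Sum.inr i) = N.endV i) (hendE : ∀ i, L.fE (Sum.inr i) = N.endE i)
    (i : Fin 5) : ∃ r, X.m (Sum.inl i) = Sum.map L.fV L.fE (markedElt s r) := by
  rcases h : X.m (Sum.inl i) with v | e
  · obtain ⟨v | v, rfl⟩ := L.fV.surjective v
    · revert h
      refine Fin.cases (fun h => ⟨Sum.inl 0, rfl⟩) (fun j h => ?_) v
      obtain rfl | rfl : s = 0 ∨ s = 1 := by omega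
      · obtain rfl : j = 0 := Subsingleton.elim (α := Fin 1) j 0
        exact ⟨Sum.inl 2, rfl⟩
      · rw [hfloor] at h
        exact absurd h (X.marking.no_floor_one _ (S.not_infVert _) (S.div_succ j) _)
    · rw [hendV] at h
      exact absurd h (X.mark_zero_ne i (N.infVert v))
  · obtain ⟨j | a | j, rfl⟩ := L.fE.surjective e
    · obtain rfl | rfl : s = 0 ∨ s = 1 := by omega
      · obtain rfl : j = 0 := Subsingleton.elim (α := Fin 1) j 0
        exact ⟨Sum.inl 1, rfl⟩
      · fin_cases j
        exacts [⟨Sum.inl 1, rfl⟩, ⟨Sum.inl 2, rfl⟩]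
    · exact ⟨Sum.inr a, rfl⟩
    · rw [hendE] at h
      rcases X.marking.inf_pair _ (N.infVert (Sum.inr j)) _ (Or.inl (N.src_eq _)) with h' | h'
      · exact absurd ⟨_, h⟩ h'.2
      · exact absurd ⟨_, N.mark_vert j⟩ h'.2

include S N in
lemma exists_mark_zero (hs : s < 2) (hfloor : ∀ v, L.fV (Sum.inl v) = S.floor v)
    (hendV : ∀ i, L.fV (Sum.inr i) = N.endV i) (hedge : ∀ j, L.fE (Sum.inl j) = S.edge j)
    (hendE : ∀ i, L.fE (Sum.inr i) = N.endE i) :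
    ∃ k, ∀ r, X.m (Sum.inl (markPos k r)) = Sum.map L.fV L.fE (markedElt s r) := by
  choose r hr using S.exists_markedElt N hs hfloor hendV hendE
  have hrinj : Function.Injective r := fun i j h =>
    Sum.inl_injective (X.marking.inj ((hr i).trans (h ▸ (hr j).symm)))
  have hrbij := (Fintype.bijective_iff_injective_and_card r).2 ⟨hrinj, by simp⟩
  obtain ⟨f, -, hf⟩ := Function.bijective_iff_has_inverse.1 hrbij
  have hm : ∀ x, X.m (Sum.inl (f x)) = Sum.map L.fV L.fE (markedElt s x) := by
    intro x
    rw [hr, hf x]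
  have h01 : f (Sum.inl 0) < f (Sum.inl 1) := by
    refine X.marking.incr _ _ (.single ?_)
    rw [hm, hm]
    exact L.src_eq (Sum.inl 0)
  have h12 : f (Sum.inl 1) < f (Sum.inl 2) := by
    obtain rfl | rfl : s = 0 ∨ s = 1 := by omega
    · refine X.marking.incr _ _ (.single ?_)
      rw [hm, hm]
      exact L.tgt_eq (Sum.inl 0)
    · refine S.mark_lt 0 1 (by decide) _ _ ?_ ?_
      · rw [hm, ← hedge]
        rfl
      · rw [hm, ← hedge]
        rfl
  have hend : ∀ a, f (Sum.inr a) = N.pos a := by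
    intro a
    refine Sum.inl_injective (X.marking.inj ((hm _).trans ((N.mark_edge a).trans ?_).symm))
    rw [← hendE]
    rfl
  obtain ⟨k, rfl⟩ := exists_eq_markPos hf.injective h01 h12 (by rw [hend, hend]; exact N.pos_lt)
  exact ⟨k, hm⟩

include S N in
lemma exists_presentation (hs : s < 2) : ∃ k t, Nonempty (Presentation X s k t) := by
  obtain ⟨t, L, hfloor, hendV, hedge, hendE⟩ := S.exists_starLayout N
  obtain ⟨k, hk⟩ := S.exists_mark_zero N hs hfloor hendV hedge hendE
  refine ⟨k, t, ⟨⟨L, fun j => ?_, hk, fun j => ?_⟩⟩⟩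
  · have h1 := L.div_succ j
    rw [hfloor, S.div_succ] at h1
    omega
  · rw [hendV]
    exact N.mark_vert j

end Skeleton

lemma MarkedFD.exists_presentation (X : MarkedQuartic) :
    ∃ s < 2, ∃ k t, Nonempty (Presentation X s k t) := by
  obtain ⟨N⟩ := X.exists_endLabelling
  obtain ⟨s, hs, ⟨S⟩⟩ := N.exists_skeleton
  exact ⟨s, hs, S.exists_presentation N hs⟩

/-- The contribution of a floor other than floor `0` which receives `n` ends. -/
noncomputable def leafWeight (s n : ℕ) : LaurentPolynomial ℚ :=
  if n < leafDiv s then qInt (leafDiv s - n) ^ 2 else 0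

/-- Labels of the equivalence classes of marked floor diagrams with `s + 2` floors. -/
abbrev MarkedStar (s : ℕ) :=
  {x : Fin 10 × (EndLabel → Fin (s + 2)) // Admissible s x.1 x.2}

lemma admissible_iff {s : ℕ} {k : Fin 10} {t : EndLabel → Fin (s + 2)} : Admissible s k t ↔
    ((∀ i : Fin 2, t (Sum.inl i) = 0 → endPos k i < corePos k 0) ∧
      (s = 0 → ∀ i : Fin 2, t (Sum.inl i) ≠ 0 → endPos k i < corePos k 2)) ∧
    ∀ j : Fin (s + 1), fiberCard t j.succ < leafDiv s :=
  ⟨fun h => ⟨⟨h.lt_root, h.lt_leaf⟩, h.card_lt⟩, fun h => ⟨h.1.1, h.1.2, h.2⟩⟩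

lemma sum_markedStar (s : ℕ) : ∑ x : MarkedStar s,
      ∏ j : Fin (s + 1), qInt (leafDiv s - fiberCard x.1.2 j.succ) ^ 2 =
    ∑ y : Fin 10 × (Fin 2 → Fin (s + 2)),
      if (∀ i, y.2 i = 0 → endPos y.1 i < corePos y.1 0) ∧
          (s = 0 → ∀ i, y.2 i ≠ 0 → endPos y.1 i < corePos y.1 2) then
        ∑ t : Fin 6 → Fin (s + 2),
          ∏ j : Fin (s + 1), leafWeight s (fiberCard y.2 j.succ + fiberCard t j.succ)
      else 0 := by
  rw [← Finset.sum_subtype (Finset.univ.filter fun x : Fin 10 × (EndLabel → Fin (s + 2)) =>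
    Admissible s x.1 x.2) (by simp)
    (fun x => ∏ j : Fin (s + 1), qInt (leafDiv s - fiberCard x.2 j.succ) ^ 2),
    Finset.sum_filter, Fintype.sum_prod_type, Fintype.sum_prod_type]
  refine Finset.sum_congr rfl fun k _ => ?_
  rw [← (Equiv.sumArrowEquivProdArrow (Fin 2) (Fin 6) (Fin (s + 2))).symm.sum_comp,
    Fintype.sum_prod_type]
  refine Finset.sum_congr rfl fun t _ => ?_
  simp only [leafWeight, Finset.prod_ite_zero, admissible_iff, fiberCard_sum, ite_and,
    Equiv.sumArrowEquivProdArrow_symm_apply_inl, Equiv.sumArrowEquivProdArrow_symm_apply_inr,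
    Finset.mem_univ, true_imp_iff]
  split_ifs <;> simp

lemma sum_ite_comp {α β M : Type} [Fintype α] [DecidableEq β] [Semiring M] (p : α → Prop)
    [DecidablePred p] (g : α → β) (T : Finset β) (G : β → M)
    (hG : ∀ x, p x → g x ∉ T → G (g x) = 0) : ∑ x, (if p x then G (g x) else 0) =
      ∑ c ∈ T, ((Finset.univ.filter fun x => p x ∧ g x = c).card : M) * G c := by
  simp only [Finset.card_filter, Nat.cast_sum, Finset.sum_mul]
  rw [Finset.sum_comm]
  refine Finset.sum_congr rfl fun x _ => ?_
  by_cases hp : p x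
  · by_cases hx : g x ∈ T
    · simp [hp, hx]
    · simp [hp, hx, hG x hp hx]
  · simp [hp]

lemma sum_fiberCard_one {M : Type} [CommRing M] (n : ℕ) (ψ : ℕ → M) :
    ∑ t : Fin n → Fin 2, ψ (fiberCard t 1) =
      ∑ c ∈ Finset.range (n + 1), (n.choose c : M) * ψ c := by
  have h := Finset.sum_powerset_apply_card ψ (x := (Finset.univ : Finset (Fin n)))
  simp only [Finset.card_univ, Fintype.card_fin, nsmul_eq_mul] at h
  rw [← h]
  refine Finset.sum_bij' (fun t _ => Finset.univ.filter fun i => t i = 1)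
    (fun A _ i => if i ∈ A then 1 else 0) (by simp) (by simp) ?_ ?_ ?_
  · intro t _
    ext i
    have : ∀ v : Fin 2, (if v = 1 then (1 : Fin 2) else 0) = v := by decide
    simp [this]
  · intro A _
    ext i
    simp
  · exact fun t _ => rfl

lemma fiberCard_cons {n m : ℕ} (v w : Fin m) (t : Fin n → Fin m) :
    fiberCard (Fin.cons v t : Fin (n + 1) → Fin m) w = fiberCard t w + if v = w then 1 else 0 := by
  simp only [fiberCard, Finset.card_filter, Fin.sum_univ_succ, Fin.cons_zero, Fin.cons_succ]
  exact add_comm _ _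

lemma sum_fiberCard_one_two {M : Type} [CommRing M] (n : ℕ) (ψ : ℕ → ℕ → M)
    (h1 : ∀ a b, 2 ≤ a → ψ a b = 0) (h2 : ∀ a b, 2 ≤ b → ψ a b = 0) :
    ∑ t : Fin n → Fin 3, ψ (fiberCard t 1) (fiberCard t 2) =
      ψ 0 0 + n * (ψ 1 0 + ψ 0 1) + n * (n - 1) * ψ 1 1 := by
  induction n generalizing ψ with
  | zero => simp [fiberCard]
  | succ n ih =>
    rw [← (Fin.consEquiv fun _ => Fin 3).sum_comp, Fintype.sum_prod_type_right]
    have := ih (fun a b => ψ a b + ψ (a + 1) b + ψ a (b + 1))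
      (fun a b h => by simp [h1 a b h, h1 a (b + 1) h, h1 (a + 1) b (by omega)])
      (fun a b h => by simp [h2 a b h, h2 (a + 1) b h, h2 a (b + 1) (by omega)])
    refine Eq.trans (Finset.sum_congr rfl fun t _ => ?_) (this.trans ?_)
    · rw [Fin.sum_univ_three]
      simp [Fin.consEquiv, fiberCard_cons]
    · simp only [zero_add, Nat.reduceAdd, h1 2 _ le_rfl, h2 _ 2 le_rfl]
      push_cast
      ring

lemma sum_markedStar_zero : ∑ x : MarkedStar 0,
    ∏ j : Fin 1, qInt (leafDiv 0 - fiberCard x.1.2 j.succ) ^ 2 =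
      qInt 4 ^ 2 + 10 * qInt 3 ^ 2 + 45 * qInt 2 ^ 2 + 116 := by
  have key : ∀ a, ∑ t : Fin 6 → Fin 2, leafWeight 0 (a + fiberCard t 1) =
      ∑ c ∈ Finset.range 7, (Nat.choose 6 c : LaurentPolynomial ℚ) * leafWeight 0 (a + c) :=
    fun a => sum_fiberCard_one 6 fun c => leafWeight 0 (a + c)
  have h := sum_ite_comp
    (fun y : Fin 10 × (Fin 2 → Fin 2) => (∀ i, y.2 i = 0 → endPos y.1 i < corePos y.1 0) ∧
      (∀ i, y.2 i ≠ 0 → endPos y.1 i < corePos y.1 2)) (fun y => fiberCard y.2 1)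
    (Finset.range 3) (fun a => ∑ t : Fin 6 → Fin 2, leafWeight 0 (a + fiberCard t 1))
    (fun y _ hy => absurd (Finset.mem_range.2 (Nat.lt_succ_of_le ?_)) hy)
  · rw [sum_markedStar]
    refine (Finset.sum_congr rfl fun y _ => if_congr (by simp only [true_imp_iff]) ?_ rfl).trans
      (h.trans ?_)
    · simp only [Fin.prod_univ_succ, Fin.prod_univ_zero, mul_one]
      rfl
    have hcard : ∀ c : Fin 3, (Finset.univ.filter fun y : Fin 10 × (Fin 2 → Fin 2) =>
        ((∀ i, y.2 i = 0 → endPos y.1 i < corePos y.1 0) ∧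
          ∀ i, y.2 i ≠ 0 → endPos y.1 i < corePos y.1 2) ∧ fiberCard y.2 1 = c).card =
        ![1, 4, 6] c := by
      decide +kernel
    have h0 := hcard 0
    have h1 := hcard 1
    have h2 := hcard 2
    simp only [Fin.val_zero, Fin.val_one, Fin.val_two] at h0 h1 h2
    simp only [Finset.sum_range_succ, Finset.sum_range_zero, h0, h1, h2, key]
    simp [leafWeight, leafDiv, qInt_one, Nat.choose]
    ring
  · exact Finset.card_le_univ (α := Fin 2) _

lemma sum_markedStar_one : ∑ x : MarkedStar 1,
    ∏ j : Fin 2, qInt (leafDiv 1 - fiberCard x.1.2 j.succ) ^ 2 =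
      qInt 2 ^ 4 + 22 * qInt 2 ^ 2 + 110 := by
  have key : ∀ a : ℕ × ℕ, ∑ t : Fin 6 → Fin 3,
      leafWeight 1 (a.1 + fiberCard t 1) * leafWeight 1 (a.2 + fiberCard t 2) =
        leafWeight 1 a.1 * leafWeight 1 a.2 +
          6 * (leafWeight 1 (a.1 + 1) * leafWeight 1 a.2 +
            leafWeight 1 a.1 * leafWeight 1 (a.2 + 1)) +
          30 * (leafWeight 1 (a.1 + 1) * leafWeight 1 (a.2 + 1)) := by
    intro a
    have hz : ∀ m b, 2 ≤ b → leafWeight 1 (m + b) = 0 := fun m b hb =>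
      if_neg (by simp [leafDiv]; omega)
    refine (sum_fiberCard_one_two 6 (fun x y => leafWeight 1 (a.1 + x) * leafWeight 1 (a.2 + y))
      (fun x y hx => by simp [hz _ x hx]) (fun x y hy => by simp [hz _ y hy])).trans ?_
    norm_num
  have h := sum_ite_comp
    (fun y : Fin 10 × (Fin 2 → Fin 3) => (∀ i, y.2 i = 0 → endPos y.1 i < corePos y.1 0))
    (fun y => (fiberCard y.2 1, fiberCard y.2 2))
    (Finset.range 3 ×ˢ Finset.range 3) (fun a => ∑ t : Fin 6 → Fin 3,
      leafWeight 1 (a.1 + fiberCard t 1) * leafWeight 1 (a.2 + fiberCard t 2))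
    (fun y _ hy => absurd (Finset.mem_product.2 ⟨Finset.mem_range.2 (Nat.lt_succ_of_le ?_),
      Finset.mem_range.2 (Nat.lt_succ_of_le ?_)⟩) hy)
  · rw [sum_markedStar]
    refine (Finset.sum_congr rfl fun y _ =>
      if_congr (by simp only [one_ne_zero, false_imp_iff, and_true]) ?_ rfl).trans (h.trans ?_)
    · simp only [Fin.prod_univ_succ, Fin.prod_univ_zero, mul_one]
      rfl
    have hcard : ∀ a b : Fin 2, (Finset.univ.filter fun y : Fin 10 × (Fin 2 → Fin 3) =>
        (∀ i, y.2 i = 0 → endPos y.1 i < corePos y.1 0) ∧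
          (fiberCard y.2 1, fiberCard y.2 2) = ((a : ℕ), (b : ℕ))).card =
        ![![1, 5], ![5, 20]] a b := by
      decide +kernel
    have h00 := hcard 0 0
    have h01 := hcard 0 1
    have h10 := hcard 1 0
    have h11 := hcard 1 1
    simp only [Fin.val_zero, Fin.val_one] at h00 h01 h10 h11
    simp only [Finset.sum_product, Finset.sum_range_succ, Finset.sum_range_zero, key, h00, h01,
      h10, h11]
    simp [leafWeight, leafDiv, qInt_one]
    ring
  · exact Finset.card_le_univ (Finset.univ.filter fun i => y.2 i = 1)
  · exact Finset.card_le_univ (Finset.univ.filter fun i => y.2 i = 2)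

/-- In `X₆'` (`k = 6`), for the class `d = 4[L] − Σ_{i=1}^6 [E_i]`
(so `a = 4`, `bᵢ = 1` for all `i`, and `d·[E] = 2`), the refined count of `d`-marked
floor diagrams of genus `0` and type `(∅,(1,1))` is
`N_q^{∅,(1,1)} = [2]_q⁴ + [4]_q² + 10[3]_q² + 67[2]_q² + 226`. -/
theorem refined_count_4L_type_empty_11 :
    IsRefinedCount 6 0 4 (fun _ => 1) [] [1, 1]
      (qInt 2 ^ 4 + qInt 4 ^ 2 + 10 * qInt 3 ^ 2 + 67 * qInt 2 ^ 2 + 226) := by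
  choose rep hrep using fun x : Σ s : Fin 2, MarkedStar s =>
    exists_presentation x.1.isLt x.2.2
  have P := fun x => (hrep x).some
  refine ⟨Σ s : Fin 2, MarkedStar s, inferInstance, rep, fun X => ?_, ?_⟩
  · obtain ⟨s, hs, k, t, ⟨Q⟩⟩ := MarkedFD.exists_presentation X
    refine ⟨⟨⟨s, hs⟩, ⟨(k, t), Q.admissible⟩⟩, Q.equivalent (P ⟨⟨s, hs⟩, _⟩), ?_⟩
    rintro ⟨⟨s', hs'⟩, ⟨⟨k', t'⟩, h'⟩⟩ hX
    obtain ⟨Q'⟩ := Presentation.of_equivalent hX (P _)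
    obtain rfl : s = s' := by
      have hV : X.G.nV = s + 10 := Q.toStarLayout.card_vert
      have hV' : X.G.nV = s' + 10 := Q'.toStarLayout.card_vert
      omega
    obtain rfl := Presentation.index_eq hs Q Q'
    obtain rfl := Presentation.attach_eq hs Q Q'
    rfl
  · rw [Finset.sum_congr rfl fun x _ => (P x).multq_eq x.1.isLt x.2.2, Fintype.sum_sigma,
      Fin.sum_univ_two]
    refine Eq.trans ?_ (congrArg₂ (· + ·) sum_markedStar_zero sum_markedStar_one).symm
    ring
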